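/- arXiv:1808.04948 — 2 statements merged into one kernel-verified Lean document; each statement's English description precedes it below -/
import Mathlib

section
/- Fix K, K̂ ∈ ℕ with 1 ≤ K < K̂. Define ξ₁ := ((K̂+1)/K̂)^{h(K̂)}, ξ₂ := ∏_{k=K+1}^{K̂} ((k+1)/k)^{k(k−1)^{k−2} e^{−k}/k!}, ξ₃ := ∏_{k=K+1}^{K̂} ((2k−1)/(2k−2))^{(k^{k−1} − k(k−1)^{k−2}) e^{−k}/k!}, and ξ₄ := ∏_{k=1}^{K} ∏_{(T,v) ∈ 𝓕_k} g(T,v)^{f_K(k)}. Then for every ε > 0, asymptotically almost surely c(𝒯_n) ≤ (ξ₁ξ₂ξ₃ξ₄ + ε)^n. -/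
open Filter Topology
open scoped Classical

/-- The number of subtrees of a graph `G` on `Fin n`: the number of (nonempty) vertex
subsets inducing a connected subgraph. -/
noncomputable def subtreeCount {n : ℕ} (G : SimpleGraph (Fin n)) : ℕ :=
  Nat.card {S : Set (Fin n) // (G.induce S).Connected}

/-- The probability that a uniformly random labelled tree on `n` vertices satisfies `p`. -/
noncomputable def treeProb (n : ℕ) (p : SimpleGraph (Fin n) → Prop) : ℝ :=
  (Nat.card {G : SimpleGraph (Fin n) // G.IsTree ∧ p G} : ℝ) /
    (Nat.card {G : SimpleGraph (Fin n) // G.IsTree} : ℝ)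

/-- `g(T,v)`: one plus the number of subtrees of `T` containing `v`. -/
noncomputable def gval {k : ℕ} (T : SimpleGraph (Fin k)) (v : Fin k) : ℕ :=
  1 + Nat.card {S : Set (Fin k) // v ∈ S ∧ (T.induce S).Connected}

/-- `f_K(k) = e^{-k}/k! - ∑_{ℓ=k+1}^K (ℓ-k)^{ℓ-k-1} C(ℓ, ℓ-k) e^{-ℓ}/ℓ!`. -/
noncomputable def fK (K k : ℕ) : ℝ :=
  Real.exp (-(k : ℝ)) / (Nat.factorial k) -
    ∑ l ∈ Finset.Icc (k + 1) K,
      ((l - k : ℕ) : ℝ) ^ (l - k - 1) * (Nat.choose l (l - k)) *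
        Real.exp (-(l : ℝ)) / (Nat.factorial l)

/-- `h(K) = 1 - ∑_{k=1}^K k^{k-1} e^{-k}/k!`. -/
noncomputable def hfun (K : ℕ) : ℝ :=
  1 - ∑ k ∈ Finset.Icc 1 K, (k : ℝ) ^ (k - 1) * Real.exp (-(k : ℝ)) / (Nat.factorial k)

/-- `ξ₁ = ((K̂+1)/K̂)^{h(K̂)}`. -/
noncomputable def xi1 (Khat : ℕ) : ℝ :=
  (((Khat : ℝ) + 1) / (Khat : ℝ)) ^ (hfun Khat)

/-- `ξ₂ = ∏_{k=K+1}^{K̂} ((k+1)/k)^{k (k-1)^{k-2} e^{-k}/k!}`. -/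
noncomputable def xi2 (K Khat : ℕ) : ℝ :=
  ∏ k ∈ Finset.Icc (K + 1) Khat,
    (((k : ℝ) + 1) / (k : ℝ)) ^
      (((k * (k - 1) ^ (k - 2) : ℕ) : ℝ) * Real.exp (-(k : ℝ)) / (Nat.factorial k))

/-- `ξ₃ = ∏_{k=K+1}^{K̂} ((2k-1)/(2k-2))^{(k^{k-1} - k (k-1)^{k-2}) e^{-k}/k!}`. -/
noncomputable def xi3 (K Khat : ℕ) : ℝ :=
  ∏ k ∈ Finset.Icc (K + 1) Khat,
    ((2 * (k : ℝ) - 1) / (2 * (k : ℝ) - 2)) ^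
      (((k ^ (k - 1) - k * (k - 1) ^ (k - 2) : ℕ) : ℝ) *
        Real.exp (-(k : ℝ)) / (Nat.factorial k))

/-- `ξ₄ = P_K = ∏_{k=1}^K ∏_{(T,v) ∈ 𝓕_k} g(T,v)^{f_K(k)}`. -/
noncomputable def xi4 (K : ℕ) : ℝ :=
  ∏ k ∈ Finset.Icc 1 K,
    ∏ T : SimpleGraph (Fin k), ∏ v : Fin k,
      if T.IsTree then ((gval T v : ℝ)) ^ (fK K k) else 1


/-!
Root the tree and let `s(v)` be the number of subtrees with top vertex `v`. The recursion
`s(v) = ∏ (1 + s(w))`, over the children `w` of `v`, telescopes to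
`log s(root) = ∑ log (1 + 1 / s(v))`, over all other vertices. For a vertex `v` with `k` descendants
the exact value of `s(v)` is kept if `k ≤ K`; for `K < k ≤ K̂` one uses `s(v) ≥ k`, improved to
`s(v) ≥ 2k - 2` if `v` has at least two children, and `s(v) > K̂` for all larger `k`. Each of the
resulting sums over the vertices with `k` descendants is concentrated, by Cayley's formula and the
second moment method, around `n e⁻ᵏ / k!` times the sum over all rooted trees on `k` vertices.
Collecting terms gives `log s(root) ≤ n log (ξ₁ξ₂ξ₃ξ₄) + o(n)`, where `f_K` arises from exchanging
a sum over rooted trees with the sum over their fringe subtrees. Finally `c(T) ≤ n s(root)`, since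
`s` is largest at the root, and `ε` absorbs the factor `n`.
-/

/-! ### Parent maps and Cayley's formula for rooted forests -/

lemma eqOn_update_compl {α β : Type*} [DecidableEq α] (f : α → β) (x : α) (b : β) :
    Set.EqOn f (Function.update f x b) {x}ᶜ :=
  fun _ hw => (Function.update_of_ne hw b f).symm

section Descendants

variable {α : Type*} [Fintype α] {p q : α → α} {r u v w x : α}

/-- The descendants of `v` under the parent map `p`, including `v` itself: the vertex set of the
fringe subtree at `v`. Roots are encoded as fixed points of `p`. -/
noncomputable def descendants (p : α → α) (v : α) : Finset α :=
  Finset.univ.filter fun w => ∃ i : ℕ, p^[i] w = v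

lemma mem_descendants : w ∈ descendants p v ↔ ∃ i : ℕ, p^[i] w = v := by simp [descendants]

lemma self_mem_descendants (p : α → α) (v : α) : v ∈ descendants p v :=
  mem_descendants.2 ⟨0, rfl⟩

lemma card_descendants_pos (p : α → α) (v : α) : 0 < (descendants p v).card :=
  Finset.card_pos.2 ⟨v, self_mem_descendants p v⟩

lemma mem_descendants_iff_eq_or_apply_mem :
    w ∈ descendants p v ↔ w = v ∨ p w ∈ descendants p v := by
  simp only [mem_descendants]
  constructor
  · rintro ⟨_ | i, hi⟩
    exacts [Or.inl hi, Or.inr ⟨i, hi⟩]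
  · rintro (h | ⟨i, hi⟩)
    exacts [⟨0, h⟩, ⟨i + 1, hi⟩]

lemma mem_descendants_of_apply_mem (h : p w ∈ descendants p v) : w ∈ descendants p v :=
  mem_descendants_iff_eq_or_apply_mem.2 (Or.inr h)

lemma apply_mem_descendants (h : w ∈ descendants p v) (hne : w ≠ v) : p w ∈ descendants p v :=
  (mem_descendants_iff_eq_or_apply_mem.1 h).resolve_left hne

@[elab_as_elim]
lemma descendants_induction {motive : ∀ x, x ∈ descendants p v → Prop}
    (top : motive v (self_mem_descendants p v))
    (step : ∀ x (hx : x ∈ descendants p v) (hxv : x ≠ v),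
      motive (p x) (apply_mem_descendants hx hxv) → motive x hx)
    (hx : x ∈ descendants p v) : motive x hx := by
  obtain ⟨i, hi⟩ := mem_descendants.1 hx
  induction i generalizing x with
  | zero =>
    obtain rfl : x = v := hi
    exact top
  | succ i ih =>
    obtain rfl | hxv := eq_or_ne x v
    · exact top
    · exact step x hx hxv (ih (apply_mem_descendants hx hxv) hi)

lemma descendants_subset_descendants (h : u ∈ descendants p v) :
    descendants p u ⊆ descendants p v := by
  intro w hw
  obtain ⟨i, rfl⟩ := mem_descendants.1 hw
  obtain ⟨j, rfl⟩ := mem_descendants.1 h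
  exact mem_descendants.2 ⟨j + i, Function.iterate_add_apply p j i w⟩

lemma mem_descendants_total (hu : x ∈ descendants p u) (hv : x ∈ descendants p v) :
    u ∈ descendants p v ∨ v ∈ descendants p u := by
  obtain ⟨i, rfl⟩ := mem_descendants.1 hu
  obtain ⟨j, rfl⟩ := mem_descendants.1 hv
  simp only [mem_descendants, ← Function.iterate_add_apply]
  rcases le_total i j with h | h
  · exact Or.inl ⟨j - i, by rw [Nat.sub_add_cancel h]⟩
  · exact Or.inr ⟨i - j, by rw [Nat.sub_add_cancel h]⟩

lemma eq_of_fixed_mem_descendants (hr : p r = r) (h : r ∈ descendants p v) : r = v := by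
  obtain ⟨i, hi⟩ := mem_descendants.1 h
  rwa [Function.iterate_fixed hr] at hi

lemma eq_of_apply_mem_descendants_self (hr : p r = r) (hx : x ∈ descendants p r)
    (hpx : p x ∈ descendants p x) : x = r := by
  obtain ⟨i, hi⟩ := mem_descendants.1 hx
  obtain ⟨j, hj : p^[j + 1] x = x⟩ := mem_descendants.1 hpx
  have hper : p^[(j + 1) * i] x = x := by
    rw [Function.iterate_mul]
    exact Function.iterate_fixed hj i
  rwa [Nat.succ_mul, Function.iterate_add_apply, hi, Function.iterate_fixed hr, eq_comm] at hper

lemma eq_of_mem_descendants_of_mem_descendants (hr : p r = r) (hx : x ∈ descendants p r)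
    (hxv : x ∈ descendants p v) (hvx : v ∈ descendants p x) : x = v := by
  by_contra hne
  have hxr : x = r :=
    eq_of_apply_mem_descendants_self hr hx
      (descendants_subset_descendants hvx (apply_mem_descendants hxv hne))
  exact hne (eq_of_fixed_mem_descendants (hxr ▸ hr) hxv)

lemma mem_descendants_or_of_eqOn_compl (h : Set.EqOn p q {x}ᶜ) (hw : w ∈ descendants p v) :
    w ∈ descendants q x ∨ w ∈ descendants q v := by
  induction hw using descendants_induction with
  | top => exact Or.inr (self_mem_descendants q v)
  | step w _ _ ih =>
    obtain rfl | hwx := eq_or_ne w x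
    · exact Or.inl (self_mem_descendants q w)
    · rw [h hwx] at ih
      exact ih.imp mem_descendants_of_apply_mem mem_descendants_of_apply_mem

lemma descendants_subset_of_eqOn_compl (h : Set.EqOn p q {x}ᶜ) :
    descendants p x ⊆ descendants q x :=
  fun _ hw => (mem_descendants_or_of_eqOn_compl h hw).elim id id

lemma mem_descendants_of_eqOn {A : Finset α} (hw : w ∈ A) (hmap : ∀ x ∈ A, x ≠ v → p x ∈ A)
    (h : ∀ x ∈ A, x ≠ v → p x = q x) (hv : w ∈ descendants p v) : w ∈ descendants q v := by
  induction hv using descendants_induction with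
  | top => exact self_mem_descendants q v
  | step x _ hxv ih =>
    exact mem_descendants_of_apply_mem (h x hw hxv ▸ ih (hmap x hw hxv))

lemma descendants_subset_of_forall_notMem {A : Finset α} (hv : v ∈ A)
    (h : ∀ w ∉ A, p w ∉ A) : descendants p v ⊆ A := by
  intro w hw
  obtain ⟨i, hi⟩ := mem_descendants.1 hw
  have hiter : Set.MapsTo p^[i] (A : Set α)ᶜ (A : Set α)ᶜ := Set.MapsTo.iterate h i
  by_contra hwA
  exact hiter hwA (Finset.mem_coe.2 (hi ▸ hv))

lemma descendants_conj {β : Type*} [Fintype β] (e : α ≃ β) (p : α → α) (v : α) :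
    descendants (e.conj p) (e v) = (descendants p v).map e.toEmbedding := by
  ext w
  have hsemi : Function.Semiconj e p (e.conj p) := fun x => by simp [Equiv.conj_apply]
  obtain ⟨w, rfl⟩ := e.surjective w
  simp [mem_descendants, ← (hsemi.iterate_right _).eq]

end Descendants

section RootedForests

variable {α : Type*} [Fintype α] {R : Finset α} {p : α → α} {u x y : α}

/-- `p` is the parent map of a rooted forest on `α` with set of roots `R`. -/
structure IsRootedForest (R : Finset α) (p : α → α) : Prop where
  map_root : ∀ r ∈ R, p r = r
  exists_root : ∀ v, ∃ r ∈ R, v ∈ descendants p r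

lemma IsRootedForest.conj (hp : IsRootedForest R p) (e : α ≃ α) (he : ∀ v, e v ∈ R ↔ v ∈ R) :
    IsRootedForest R (e.conj p) where
  map_root r hr := by
    rw [Equiv.conj_apply, hp.map_root _ ((he _).1 (by simpa using hr)), e.apply_symm_apply]
  exists_root v := by
    obtain ⟨r, hr, hv⟩ := hp.exists_root (e.symm v)
    exact ⟨e r, (he r).2 hr, by simpa [descendants_conj, Equiv.eq_symm_apply] using hv⟩

lemma IsRootedForest.sum_card_descendants (hp : IsRootedForest R p) :
    ∑ r ∈ R, (descendants p r).card = Fintype.card α := by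
  rw [← Finset.card_biUnion, ← Finset.card_univ]
  · congr 1
    ext v
    simpa using hp.exists_root v
  · intro r hr s hs hrs
    refine Finset.disjoint_left.2 fun v hvr hvs => hrs ?_
    rcases mem_descendants_total hvr hvs with h | h
    · exact eq_of_fixed_mem_descendants (hp.map_root r hr) h
    · exact (eq_of_fixed_mem_descendants (hp.map_root s hs) h).symm

variable [DecidableEq α]

lemma IsRootedForest.cut (hp : IsRootedForest R p) (x : α) :
    IsRootedForest (insert x R) (Function.update p x x) where
  map_root r hr := by
    obtain rfl | hne := eq_or_ne r x
    · exact Function.update_self ..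
    · rw [Function.update_of_ne hne, hp.map_root r (Finset.mem_of_mem_insert_of_ne hr hne)]
  exists_root v := by
    obtain ⟨r, hr, hv⟩ := hp.exists_root v
    rcases mem_descendants_or_of_eqOn_compl (eqOn_update_compl p x x) hv with h | h
    exacts [⟨x, Finset.mem_insert_self x R, h⟩, ⟨r, Finset.mem_insert_of_mem hr, h⟩]

lemma IsRootedForest.apply_notMem_descendants_cut (hp : IsRootedForest R p) (hx : x ∉ R) :
    p x ∉ descendants (Function.update p x x) x := by
  intro h
  obtain ⟨r, hr, hxr⟩ := hp.exists_root x
  have hpx := descendants_subset_of_eqOn_compl (eqOn_update_compl p x x).symm h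
  exact hx (eq_of_apply_mem_descendants_self (hp.map_root r hr) hxr hpx ▸ hr)

lemma IsRootedForest.graft (hp : IsRootedForest (insert x R) p) (hx : x ∉ R)
    (hu : u ∉ descendants p x) : IsRootedForest R (Function.update p x u) where
  map_root r hr := by
    rw [Function.update_of_ne (ne_of_mem_of_not_mem hr hx),
      hp.map_root r (Finset.mem_insert_of_mem hr)]
  exists_root := by
    have hagree := eqOn_update_compl p x u
    have of_root : ∀ {v r}, r ∈ insert x R → v ∈ descendants p r →
        v ∈ descendants (Function.update p x u) x ∨
          ∃ r ∈ R, v ∈ descendants (Function.update p x u) r := by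
      intro v r hr hv
      obtain rfl | hne := eq_or_ne r x
      · exact Or.inl (descendants_subset_of_eqOn_compl hagree hv)
      · exact (mem_descendants_or_of_eqOn_compl hagree hv).imp_right
          fun h => ⟨r, Finset.mem_of_mem_insert_of_ne hr hne, h⟩
    obtain ⟨r, hr, hur⟩ : ∃ r ∈ R, u ∈ descendants (Function.update p x u) r := by
      obtain ⟨r, hr, hur⟩ := hp.exists_root u
      refine (of_root hr hur).resolve_left fun h => hu ?_
      exact descendants_subset_of_eqOn_compl hagree.symm h
    have hxr : x ∈ descendants (Function.update p x u) r :=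
      mem_descendants_of_apply_mem (by rwa [Function.update_self])
    intro v
    obtain ⟨s, hs, hv⟩ := hp.exists_root v
    exact (of_root hs hv).elim (fun h => ⟨r, hr, descendants_subset_descendants hxr h⟩) id

/-- The parent maps of the rooted forests on `α` with set of roots `R`. -/
noncomputable def rootedForests (R : Finset α) : Finset (α → α) :=
  Finset.univ.filter (IsRootedForest R)

lemma mem_rootedForests : p ∈ rootedForests R ↔ IsRootedForest R p := by simp [rootedForests]

lemma rootedForests_univ : rootedForests (Finset.univ : Finset α) = {id} := by
  ext p
  rw [mem_rootedForests, Finset.mem_singleton]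
  refine ⟨fun h => funext fun x => h.map_root x (Finset.mem_univ x), ?_⟩
  rintro rfl
  exact ⟨fun _ _ => rfl, fun v => ⟨v, Finset.mem_univ v, self_mem_descendants id v⟩⟩

-- Cut the edge above `x`; its upper end may have been any vertex outside the tree of `x`.
lemma card_rootedForests_eq_sum_insert (hx : x ∉ R) :
    (rootedForests R).card = ∑ p ∈ rootedForests (insert x R), (descendants p x)ᶜ.card := by
  rw [← Finset.card_sigma]
  refine Finset.card_nbij' (fun p => ⟨Function.update p x x, p x⟩)
    (fun a => Function.update a.1 x a.2) (fun p hp => ?_) ?_ (fun p _ => by simp) ?_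
  · have hp := mem_rootedForests.1 hp
    simpa [mem_rootedForests] using ⟨hp.cut x, hp.apply_notMem_descendants_cut hx⟩
  · rintro ⟨p, u⟩ h
    simp only [Finset.coe_sigma, Set.mem_sigma_iff, Finset.mem_coe, Finset.mem_compl,
      mem_rootedForests] at h
    exact mem_rootedForests.2 (h.1.graft hx h.2)
  · rintro ⟨p, u⟩ h
    simp only [Finset.coe_sigma, Set.mem_sigma_iff, Finset.mem_coe, mem_rootedForests] at h
    have hpx : Function.update p x x = p :=
      Function.update_eq_self_iff.2 (h.1.map_root x (Finset.mem_insert_self x R)).symm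
    simp [hpx]

lemma sum_card_descendants_comm (hx : x ∈ R) (hy : y ∈ R) :
    ∑ p ∈ rootedForests R, (descendants p x).card =
      ∑ p ∈ rootedForests R, (descendants p y).card := by
  have hswap : ∀ v, Equiv.swap x y v ∈ R ↔ v ∈ R := fun v => by
    rw [Equiv.swap_apply_def]
    split_ifs with h₁ h₂ <;> simp [*]
  refine Finset.sum_equiv (Equiv.swap x y).conj (fun p => ?_) fun p _ => ?_
  · simp only [mem_rootedForests]
    refine ⟨fun hp => hp.conj _ hswap, fun hp => ?_⟩
    convert hp.conj (Equiv.swap x y) hswap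
    ext v
    simp [Equiv.conj_apply]
  · have h := descendants_conj (Equiv.swap x y) p x
    rw [Equiv.swap_apply_left] at h
    rw [h, Finset.card_map]

lemma card_mul_sum_card_descendants (hx : x ∈ R) :
    R.card * ∑ p ∈ rootedForests R, (descendants p x).card =
      (rootedForests R).card * Fintype.card α :=
  calc R.card * ∑ p ∈ rootedForests R, (descendants p x).card
      = ∑ y ∈ R, ∑ p ∈ rootedForests R, (descendants p y).card := by
        rw [← smul_eq_mul, ← Finset.sum_const]
        exact Finset.sum_congr rfl fun y hy => sum_card_descendants_comm hx hy
    _ = ∑ p ∈ rootedForests R, ∑ y ∈ R, (descendants p y).card := Finset.sum_comm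
    _ = (rootedForests R).card * Fintype.card α :=
        Finset.sum_const_nat fun p hp => (mem_rootedForests.1 hp).sum_card_descendants

lemma card_insert_mul_card_rootedForests (hx : x ∉ R) :
    (R.card + 1) * (rootedForests R).card =
      R.card * ((rootedForests (insert x R)).card * Fintype.card α) := by
  have hcompl : (rootedForests R).card +
      ∑ p ∈ rootedForests (insert x R), (descendants p x).card =
        (rootedForests (insert x R)).card * Fintype.card α := by
    rw [card_rootedForests_eq_sum_insert hx, ← Finset.sum_add_distrib]
    exact Finset.sum_const_nat fun p _ => Finset.card_compl_add_card _
  have hsum := card_mul_sum_card_descendants (Finset.mem_insert_self x R)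
  rw [Finset.card_insert_of_notMem hx, ← hcompl] at hsum
  rw [← hcompl]
  linarith

/-- **Cayley's formula** for rooted forests with a prescribed set of roots. -/
theorem card_rootedForests_mul_card (R : Finset α) :
    (rootedForests R).card * Fintype.card α = R.card * Fintype.card α ^ Rᶜ.card := by
  induction h : Rᶜ.card generalizing R with
  | zero =>
    obtain rfl : R = Finset.univ := by simpa using h
    simp [rootedForests_univ]
  | succ m ih =>
    obtain ⟨x, hx⟩ : Rᶜ.Nonempty := Finset.card_pos.1 (by omega)
    have hxR : x ∉ R := Finset.mem_compl.1 hx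
    have ih' := ih (insert x R)
      (by rw [Finset.compl_insert, Finset.card_erase_of_mem hx, h, Nat.add_sub_cancel])
    rw [Finset.card_insert_of_notMem hxR] at ih'
    refine Nat.eq_of_mul_eq_mul_left (Nat.succ_pos R.card) ?_
    rw [← mul_assoc, Nat.succ_eq_add_one, card_insert_mul_card_rootedForests hxR, ih', pow_succ]
    ring

end RootedForests

/-! ### Rooted trees and the fringe decomposition -/

section RootedTrees

variable {α : Type*} [Fintype α] {M S : Finset α} {p q : α → α} {r u v w : α}

/-- `p` is the parent map of a rooted tree with vertex set `M` and root `r`, where the ambient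
vertices outside `M` are fixed as well as the root. -/
structure IsRootedTree (M : Finset α) (r : α) (p : α → α) : Prop where
  map_root : p r = r
  apply_of_notMem : ∀ v ∉ M, p v = v
  descendants_root : descendants p r = M

namespace IsRootedTree

lemma root_mem (hp : IsRootedTree M r p) : r ∈ M :=
  hp.descendants_root ▸ self_mem_descendants p r

lemma mem_descendants_root (hp : IsRootedTree M r p) (hv : v ∈ M) : v ∈ descendants p r :=
  hp.descendants_root.symm ▸ hv

lemma descendants_subset (hp : IsRootedTree M r p) (hv : v ∈ M) : descendants p v ⊆ M :=
  hp.descendants_root ▸ descendants_subset_descendants (hp.mem_descendants_root hv)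

lemma apply_mem (hp : IsRootedTree M r p) (hv : v ∈ M) : p v ∈ M := by
  obtain rfl | hne := eq_or_ne v r
  · rwa [hp.map_root]
  · exact hp.descendants_root ▸ apply_mem_descendants (hp.mem_descendants_root hv) hne

lemma root_notMem_descendants (hp : IsRootedTree M r p) (hv : v ≠ r) : r ∉ descendants p v :=
  fun h => hv (eq_of_fixed_mem_descendants hp.map_root h).symm

lemma apply_notMem_descendants (hp : IsRootedTree M r p) (hvM : v ∈ M) (hv : v ≠ r) :
    p v ∉ descendants p v :=
  fun h => hv (eq_of_apply_mem_descendants_self hp.map_root (hp.mem_descendants_root hvM) h)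

end IsRootedTree

lemma isRootedTree_univ : IsRootedTree Finset.univ r p ↔ IsRootedForest {r} p := by
  refine ⟨fun hp => ⟨by simpa using hp.map_root, fun v => ⟨r, Finset.mem_singleton_self r,
    hp.mem_descendants_root (Finset.mem_univ v)⟩⟩, fun hp => ⟨hp.map_root r
    (Finset.mem_singleton_self r), by simp, Finset.eq_univ_of_forall fun v => ?_⟩⟩
  simpa using hp.exists_root v

variable [DecidableEq α]

/-- The tree obtained by hanging the tree `q` on `S` with root `v` below the vertex `u` of the
tree `p`. -/
def hang (S : Finset α) (v : α) (q p : α → α) (u : α) : α → α :=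
  Function.update (S.piecewise q p) v u

omit [Fintype α] in
lemma hang_self (S : Finset α) (v : α) (q p : α → α) (u : α) : hang S v q p u v = u :=
  Function.update_self ..

omit [Fintype α] in
lemma hang_of_mem (q p : α → α) (u : α) (hw : w ∈ S) (hwv : w ≠ v) :
    hang S v q p u w = q w := by
  rw [hang, Function.update_of_ne hwv, Finset.piecewise_eq_of_mem _ _ _ hw]

omit [Fintype α] in
lemma hang_of_notMem (q p : α → α) (u : α) (hv : v ∈ S) (hw : w ∉ S) :
    hang S v q p u w = p w := by
  rw [hang, Function.update_of_ne (ne_of_mem_of_not_mem hv hw).symm,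
    Finset.piecewise_eq_of_notMem _ _ _ hw]

/-- The fringe subtree of `p` at `v`, as a tree on the descendants of `v`. -/
noncomputable def fringeTree (p : α → α) (v : α) : α → α :=
  Function.update ((descendants p v).piecewise p id) v v

/-- The tree `p` on `M` without its fringe subtree at `v`. -/
noncomputable def prunedTree (M : Finset α) (p : α → α) (v : α) : α → α :=
  (M \ descendants p v).piecewise p id

lemma fringeTree_self (p : α → α) (v : α) : fringeTree p v v = v := Function.update_self ..

lemma fringeTree_of_mem (hw : w ∈ descendants p v) (hwv : w ≠ v) : fringeTree p v w = p w := by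
  rw [fringeTree, Function.update_of_ne hwv, Finset.piecewise_eq_of_mem _ _ _ hw]

lemma fringeTree_of_notMem (hw : w ∉ descendants p v) : fringeTree p v w = w := by
  rw [fringeTree, Function.update_of_ne
    (ne_of_mem_of_not_mem (self_mem_descendants p v) hw).symm,
    Finset.piecewise_eq_of_notMem _ _ _ hw, id]

lemma isRootedTree_fringeTree (p : α → α) (v : α) :
    IsRootedTree (descendants p v) v (fringeTree p v) where
  map_root := fringeTree_self p v
  apply_of_notMem _ hw := fringeTree_of_notMem hw
  descendants_root := by
    refine (descendants_subset_of_forall_notMem (self_mem_descendants p v) fun w hw => ?_).antisymm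
      fun w hw => mem_descendants_of_eqOn hw (fun x hx => apply_mem_descendants hx)
        (fun x hx hxv => (fringeTree_of_mem hx hxv).symm) hw
    rwa [fringeTree_of_notMem hw]

lemma IsRootedTree.apply_mem_sdiff (hp : IsRootedTree M r p) (hw : w ∈ M \ descendants p v) :
    p w ∈ M \ descendants p v := by
  rw [Finset.mem_sdiff] at hw ⊢
  exact ⟨hp.apply_mem hw.1, fun h => hw.2 (mem_descendants_of_apply_mem h)⟩

lemma IsRootedTree.isRootedTree_prunedTree (hp : IsRootedTree M r p) (hv : v ≠ r) :
    IsRootedTree (M \ descendants p v) r (prunedTree M p v) := by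
  have hin : ∀ w ∈ M \ descendants p v, prunedTree M p v w = p w :=
    fun w hw => Finset.piecewise_eq_of_mem _ _ _ hw
  have hout : ∀ w ∉ M \ descendants p v, prunedTree M p v w = w :=
    fun w hw => Finset.piecewise_eq_of_notMem _ _ _ hw
  have hr : r ∈ M \ descendants p v :=
    Finset.mem_sdiff.2 ⟨hp.root_mem, hp.root_notMem_descendants hv⟩
  refine ⟨(hin r hr).trans hp.map_root, hout, ?_⟩
  refine (descendants_subset_of_forall_notMem hr fun w hw => by rwa [hout w hw]).antisymm
    fun w hw => mem_descendants_of_eqOn hw (fun x hx _ => hp.apply_mem_sdiff hx)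
      (fun x hx _ => (hin x hx).symm) (hp.mem_descendants_root (Finset.mem_sdiff.1 hw).1)

lemma descendants_hang (hq : IsRootedTree S v q) (hp : IsRootedTree M r p) (hSM : Disjoint S M) :
    descendants (hang S v q p u) v = S := by
  refine (descendants_subset_of_forall_notMem hq.root_mem fun w hw => ?_).antisymm
    fun w hw => mem_descendants_of_eqOn hw (fun x hx _ => hq.apply_mem hx)
      (fun x hx hxv => (hang_of_mem q p u hx hxv).symm) (hq.mem_descendants_root hw)
  rw [hang_of_notMem q p u hq.root_mem hw]
  by_cases hwM : w ∈ M
  · exact Finset.disjoint_right.1 hSM (hp.apply_mem hwM)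
  · rwa [hp.apply_of_notMem w hwM]

lemma isRootedTree_hang (hq : IsRootedTree S v q) (hp : IsRootedTree M r p) (hSM : Disjoint S M)
    (hu : u ∈ M) : IsRootedTree (S ∪ M) r (hang S v q p u) := by
  have hM : ∀ w ∈ M, hang S v q p u w = p w := fun w hw =>
    hang_of_notMem q p u hq.root_mem (Finset.disjoint_right.1 hSM hw)
  have hout : ∀ w ∉ S ∪ M, hang S v q p u w = w := fun w hw => by
    rw [Finset.notMem_union] at hw
    rw [hang_of_notMem q p u hq.root_mem hw.1, hp.apply_of_notMem w hw.2]
  have hroot : ∀ w ∈ M, w ∈ descendants (hang S v q p u) r := fun w hw =>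
    mem_descendants_of_eqOn hw (fun x hx _ => hp.apply_mem hx) (fun x hx _ => (hM x hx).symm)
      (hp.mem_descendants_root hw)
  have hvr : v ∈ descendants (hang S v q p u) r :=
    mem_descendants_of_apply_mem ((hang_self S v q p u).symm ▸ hroot u hu)
  refine ⟨(hM r hp.root_mem).trans hp.map_root, hout, ?_⟩
  refine (descendants_subset_of_forall_notMem (Finset.mem_union_right _ hp.root_mem)
    fun w hw => by rwa [hout w hw]).antisymm (Finset.union_subset (fun w hw => ?_) hroot)
  exact descendants_subset_descendants hvr (by rwa [descendants_hang hq hp hSM])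

lemma fringeTree_hang (hq : IsRootedTree S v q) (hp : IsRootedTree M r p) (hSM : Disjoint S M) :
    fringeTree (hang S v q p u) v = q := by
  have hD : descendants (hang S v q p u) v = S := descendants_hang hq hp hSM
  funext w
  obtain rfl | hwv := eq_or_ne w v
  · rw [fringeTree_self, hq.map_root]
  by_cases hw : w ∈ S
  · rw [fringeTree_of_mem (hD.symm ▸ hw) hwv, hang_of_mem q p u hw hwv]
  · rw [fringeTree_of_notMem (hD.symm ▸ hw), hq.apply_of_notMem w hw]

lemma prunedTree_hang (hq : IsRootedTree S v q) (hp : IsRootedTree M r p) (hSM : Disjoint S M) :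
    prunedTree (S ∪ M) (hang S v q p u) v = p := by
  have hsdiff : (S ∪ M) \ S = M := by
    rw [Finset.union_sdiff_left, Finset.sdiff_eq_self_of_disjoint hSM.symm]
  rw [prunedTree, descendants_hang hq hp hSM, hsdiff]
  funext w
  by_cases hw : w ∈ M
  · rw [Finset.piecewise_eq_of_mem _ _ _ hw,
      hang_of_notMem q p u hq.root_mem (Finset.disjoint_right.1 hSM hw)]
  · rw [Finset.piecewise_eq_of_notMem _ _ _ hw, hp.apply_of_notMem w hw, id]

lemma IsRootedTree.hang_fringeTree_prunedTree (hp : IsRootedTree M r p) :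
    hang (descendants p v) v (fringeTree p v) (prunedTree M p v) (p v) = p := by
  funext w
  obtain rfl | hwv := eq_or_ne w v
  · exact hang_self ..
  by_cases hw : w ∈ descendants p v
  · rw [hang_of_mem _ _ _ hw hwv, fringeTree_of_mem hw hwv]
  rw [hang_of_notMem _ _ _ (self_mem_descendants p v) hw]
  by_cases hwM : w ∈ M
  · exact Finset.piecewise_eq_of_mem _ _ _ (Finset.mem_sdiff.2 ⟨hwM, hw⟩)
  · rw [hp.apply_of_notMem w hwM]
    exact Finset.piecewise_eq_of_notMem _ _ _ fun h => hwM (Finset.mem_sdiff.1 h).1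

/-- The parent maps of the rooted trees with vertex set `M` and root `r`. -/
noncomputable def rootedTrees (M : Finset α) (r : α) : Finset (α → α) :=
  Finset.univ.filter (IsRootedTree M r)

lemma mem_rootedTrees : p ∈ rootedTrees M r ↔ IsRootedTree M r p := by simp [rootedTrees]

lemma sum_rootedTrees_descendants_eq {N : Type*} [AddCommMonoid N] (hSM : S ⊆ M) (hr : r ∉ S)
    (hv : v ∈ S) (H : (α → α) → N) :
    ∑ p ∈ rootedTrees M r with descendants p v = S, H p =
      ∑ q ∈ rootedTrees S v, ∑ p ∈ rootedTrees (M \ S) r, ∑ u ∈ M \ S, H (hang S v q p u) := by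
  have hvr : v ≠ r := ne_of_mem_of_not_mem hv hr
  have hdisj : Disjoint S (M \ S) := Finset.disjoint_sdiff
  have hunion : S ∪ M \ S = M := Finset.union_sdiff_of_subset hSM
  simp only [← Finset.sum_product']
  symm
  refine Finset.sum_nbij' (fun a => hang S v a.1 a.2.1 a.2.2)
    (fun p => (fringeTree p v, prunedTree M p v, p v)) ?_ ?_ ?_ ?_ fun _ _ => rfl
  · rintro ⟨q, p, u⟩ h
    simp only [Finset.mem_product, mem_rootedTrees] at h
    obtain ⟨hq, hp, hu⟩ := h
    exact Finset.mem_filter.2 ⟨mem_rootedTrees.2 (hunion ▸ isRootedTree_hang hq hp hdisj hu),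
      descendants_hang hq hp hdisj⟩
  · intro p h
    obtain ⟨hp, rfl⟩ := Finset.mem_filter.1 h
    rw [mem_rootedTrees] at hp
    simp only [Finset.mem_product, mem_rootedTrees]
    exact ⟨isRootedTree_fringeTree p v, hp.isRootedTree_prunedTree hvr, Finset.mem_sdiff.2
      ⟨hp.apply_mem (hSM hv), hp.apply_notMem_descendants (hSM hv) hvr⟩⟩
  · rintro ⟨q, p, u⟩ h
    simp only [Finset.mem_product, mem_rootedTrees] at h
    obtain ⟨hq, hp, -⟩ := h
    have hpruned := prunedTree_hang (u := u) hq hp hdisj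
    rw [hunion] at hpruned
    exact Prod.ext (fringeTree_hang hq hp hdisj) (Prod.ext hpruned (hang_self ..))
  · intro p h
    obtain ⟨hp, rfl⟩ := Finset.mem_filter.1 h
    exact (mem_rootedTrees.1 hp).hang_fringeTree_prunedTree

/-- The non-root vertices of the tree `p` on `M` whose fringe subtree has `k` vertices. -/
noncomputable def fringeVertices (k : ℕ) (M : Finset α) (r : α) (p : α → α) : Finset α :=
  (M.erase r).filter fun v => (descendants p v).card = k

lemma IsRootedTree.descendants_mem_powersetCard_iff (hp : IsRootedTree M r p)
    (hv : v ∈ M.erase r) {k : ℕ} :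
    descendants p v ∈ (M.erase r).powersetCard k ↔ (descendants p v).card = k := by
  obtain ⟨hvr, hvM⟩ := Finset.mem_erase.1 hv
  rw [Finset.mem_powersetCard, and_iff_right_iff_imp]
  exact fun _ => Finset.subset_erase.2
    ⟨hp.descendants_subset hvM, hp.root_notMem_descendants hvr⟩

lemma sum_fringeVertices {N : Type*} [AddCommMonoid N] (k : ℕ) (H : (α → α) → α → N) :
    ∑ p ∈ rootedTrees M r, ∑ v ∈ fringeVertices k M r p, H p v =
      ∑ S ∈ (M.erase r).powersetCard k, ∑ v ∈ S, ∑ q ∈ rootedTrees S v,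
        ∑ p ∈ rootedTrees (M \ S) r, ∑ u ∈ M \ S, H (hang S v q p u) v := by
  have hS : ∀ S ∈ (M.erase r).powersetCard k,
      ∑ v ∈ S, ∑ q ∈ rootedTrees S v, ∑ p ∈ rootedTrees (M \ S) r, ∑ u ∈ M \ S,
          H (hang S v q p u) v =
        ∑ p ∈ rootedTrees M r, ∑ v ∈ M.erase r, if descendants p v = S then H p v else 0 := by
    intro S hS
    obtain ⟨hSM, hr⟩ := Finset.subset_erase.1 (Finset.mem_powersetCard.1 hS).1
    calc _ = ∑ v ∈ S, ∑ p ∈ rootedTrees M r with descendants p v = S, H p v :=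
          Finset.sum_congr rfl fun v hv =>
            (sum_rootedTrees_descendants_eq hSM hr hv fun p => H p v).symm
      _ = ∑ p ∈ rootedTrees M r, ∑ v ∈ S, if descendants p v = S then H p v else 0 := by
          simp only [Finset.sum_filter]
          exact Finset.sum_comm
      _ = _ := Finset.sum_congr rfl fun p _ =>
          Finset.sum_subset (Finset.mem_powersetCard.1 hS).1 fun v _ hv =>
            if_neg (by rintro rfl; exact hv (self_mem_descendants p v))
  rw [Finset.sum_congr rfl hS, Finset.sum_comm]
  refine Finset.sum_congr rfl fun p hp => ?_
  rw [Finset.sum_comm, fringeVertices, Finset.sum_filter]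
  refine Finset.sum_congr rfl fun v hv => ?_
  rw [Finset.sum_ite_eq]
  exact if_congr ((mem_rootedTrees.1 hp).descendants_mem_powersetCard_iff hv).symm rfl rfl

end RootedTrees

/-! ### Fringe functionals and their first moments -/

section Pushforward

variable {α β : Type*} [Fintype α] [Fintype β] {e : α ↪ β} {q : α → α} {p : β → β} {a v : α} {b : β}

/-- The embedding `e` identifies the fringe subtree of `q` at `v` with the fringe subtree of `p`
at `e v`. -/
structure IsFringeEmbedding (e : α ↪ β) (q : α → α) (p : β → β) (v : α) : Prop where
  apply_parent : ∀ w ∈ descendants q v, w ≠ v → p (e w) = e (q w)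
  descendants_map : descendants p (e v) = (descendants q v).map e

/-- The parent map `q` transported to the range of `e`; the points outside the range are fixed. -/
noncomputable def pushforward (e : α ↪ β) (q : α → α) : β → β :=
  Function.extend e (e ∘ q) id

omit [Fintype α] [Fintype β] in
lemma pushforward_apply (e : α ↪ β) (q : α → α) (v : α) : pushforward e q (e v) = e (q v) :=
  e.injective.extend_apply ..

omit [Fintype β] in
lemma pushforward_of_notMem (q : α → α) (hb : b ∉ Finset.univ.map e) : pushforward e q b = b :=
  Function.extend_apply' _ _ _ fun ⟨x, hx⟩ => hb (hx ▸ by simp)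

lemma descendants_pushforward (e : α ↪ β) (q : α → α) (v : α) :
    descendants (pushforward e q) (e v) = (descendants q v).map e := by
  have hsemi : Function.Semiconj e q (pushforward e q) := fun w => (pushforward_apply e q w).symm
  have hsub : descendants (pushforward e q) (e v) ⊆ Finset.univ.map e :=
    descendants_subset_of_forall_notMem (by simp) fun w hw => by
      rwa [pushforward_of_notMem q hw]
  ext b
  by_cases hb : b ∈ Finset.univ.map e
  · obtain ⟨w, -, rfl⟩ := Finset.mem_map.1 hb
    simp [mem_descendants, ← (hsemi.iterate_right _).eq]
  · exact iff_of_false (fun h => hb (hsub h))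
      fun h => hb (Finset.map_subset_map.2 (Finset.subset_univ _) h)

lemma isFringeEmbedding_pushforward (e : α ↪ β) (q : α → α) (v : α) :
    IsFringeEmbedding e q (pushforward e q) v :=
  ⟨fun w _ _ => pushforward_apply e q w, descendants_pushforward e q v⟩

lemma isRootedTree_pushforward :
    IsRootedTree (Finset.univ.map e) (e a) (pushforward e q) ↔ IsRootedTree Finset.univ a q := by
  refine ⟨fun h => ⟨?_, by simp, ?_⟩, fun h => ⟨?_, fun b => pushforward_of_notMem q, ?_⟩⟩
  · exact e.injective ((pushforward_apply e q a).symm.trans h.map_root)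
  · simpa [descendants_pushforward] using h.descendants_root
  · rw [pushforward_apply, h.map_root]
  · rw [descendants_pushforward, h.descendants_root]

lemma IsRootedTree.exists_pushforward_eq {M : Finset β} (hp : IsRootedTree M b p)
    (he : Finset.univ.map e = M) : ∃ q, pushforward e q = p := by
  subst he
  have hrange : ∀ v, ∃ w, e w = p (e v) := fun v => by
    simpa using hp.apply_mem (v := e v) (by simp)
  choose q hq using hrange
  refine ⟨q, funext fun y => ?_⟩
  by_cases hy : y ∈ Finset.univ.map e
  · obtain ⟨x, -, rfl⟩ := Finset.mem_map.1 hy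
    rw [pushforward_apply, hq]
  · rw [pushforward_of_notMem q hy, hp.apply_of_notMem y hy]

variable [DecidableEq α] [DecidableEq β]

lemma sum_rootedTrees_map {N : Type*} [AddCommMonoid N] (e : α ↪ β) (a : α) (H : (β → β) → N) :
    ∑ p ∈ rootedTrees (Finset.univ.map e) (e a), H p =
      ∑ q ∈ rootedTrees Finset.univ a, H (pushforward e q) := by
  symm
  refine Finset.sum_nbij (pushforward e) (fun q hq => ?_) (fun q _ q' _ h => funext fun x => ?_)
    (fun p hp => ?_) fun _ _ => rfl
  · exact mem_rootedTrees.2 (isRootedTree_pushforward.2 (mem_rootedTrees.1 hq))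
  · apply e.injective
    rw [← pushforward_apply e q, h, pushforward_apply]
  · have hp := mem_rootedTrees.1 (Finset.mem_coe.1 hp)
    obtain ⟨q, rfl⟩ := hp.exists_pushforward_eq rfl
    exact ⟨q, Finset.mem_coe.2 (mem_rootedTrees.2 (isRootedTree_pushforward.1 hp)), rfl⟩

end Pushforward

lemma exists_embedding_map_univ_eq {α : Type*} (S : Finset α) :
    ∃ e : Fin S.card ↪ α, Finset.univ.map e = S :=
  ⟨S.equivFin.symm.toEmbedding.trans (Function.Embedding.subtype _), by
    ext x
    simp [S.equivFin.symm.exists_congr_left]⟩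

section Cayley

variable {α : Type*} [Fintype α] [DecidableEq α] {S : Finset α} {r : α}

lemma card_rootedTrees_mul_card (hr : r ∈ S) :
    (rootedTrees S r).card * S.card = S.card ^ (S.card - 1) := by
  obtain ⟨e, he⟩ := exists_embedding_map_univ_eq S
  obtain ⟨a, -, rfl⟩ := Finset.mem_map.1 (he.symm ▸ hr)
  have hforest : rootedTrees (Finset.univ : Finset (Fin S.card)) a = rootedForests {a} := by
    ext p
    rw [mem_rootedTrees, mem_rootedForests, isRootedTree_univ]
  have htransport : (rootedTrees S (e a)).card =
      (rootedTrees (Finset.univ : Finset (Fin S.card)) a).card := by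
    simp only [Finset.card_eq_sum_ones]
    simpa only [he] using sum_rootedTrees_map e a fun _ => 1
  simpa [htransport, hforest, Finset.card_compl] using card_rootedForests_mul_card {a}

lemma pow_sub_two_mul_self {m : ℕ} (hm : m ≠ 0) : m ^ (m - 2) * m = m ^ (m - 1) := by
  match m, hm with
  | 1, _ => rfl
  | m + 2, _ => rw [← pow_succ]; rfl

/-- **Cayley's formula**: a set of `m` vertices carries `m ^ (m - 2)` trees with a given root. -/
theorem card_rootedTrees (hr : r ∈ S) : (rootedTrees S r).card = S.card ^ (S.card - 2) := by
  have hS : S.card ≠ 0 := Finset.card_ne_zero_of_mem hr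
  refine Nat.eq_of_mul_eq_mul_right (Nat.pos_of_ne_zero hS) ?_
  rw [card_rootedTrees_mul_card hr, pow_sub_two_mul_self hS]

end Cayley

lemma mem_sdiff_and_card_sdiff {α : Type*} [DecidableEq α] {M S : Finset α} {r : α} {k : ℕ}
    (hr : r ∈ M) (hS : S ∈ (M.erase r).powersetCard k) :
    r ∈ M \ S ∧ (M \ S).card = M.card - k := by
  obtain ⟨hSM, hcard⟩ := Finset.mem_powersetCard.1 hS
  obtain ⟨hSM, hrS⟩ := Finset.subset_erase.1 hSM
  exact ⟨Finset.mem_sdiff.2 ⟨hr, hrS⟩, by rw [Finset.card_sdiff_of_subset hSM, hcard]⟩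

/-- The expected number, divided by `n`, of the non-root vertices in a random tree on `n` vertices
with a given root whose fringe subtree becomes a given rooted tree on `{1, …, k}` when its vertices
are relabelled in increasing order. -/
noncomputable def fringeRatio (k n : ℕ) : ℝ :=
  (n - 1).choose k * ((n - k : ℕ) : ℝ) ^ (n - k - 1) / (n : ℝ) ^ (n - 1)

lemma pow_mul_fringeRatio (k n : ℕ) :
    (n : ℝ) ^ (n - 1) * fringeRatio k n =
      (n - 1).choose k * ((n - k : ℕ) : ℝ) ^ (n - k - 1) := by
  refine mul_div_cancel₀ _ ?_
  obtain rfl | hn := Nat.eq_zero_or_pos n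
  · simp
  · positivity

/-- A real-valued functional of a vertex of a parent map that depends only on the isomorphism
class of the fringe subtree at this vertex. -/
structure FringeFunctional where
  toFun : ∀ {α : Type} [Fintype α], (α → α) → α → ℝ
  map_eq' : ∀ {α β : Type} [Fintype α] [Fintype β] {e : α ↪ β} {q : α → α} {p : β → β} {v : α},
    IsFringeEmbedding e q p v → toFun p (e v) = toFun q v

namespace FringeFunctional

instance : CoeFun FringeFunctional fun _ => ∀ {α : Type} [Fintype α], (α → α) → α → ℝ :=
  ⟨toFun⟩

variable {α β : Type} [Fintype α] [Fintype β] {M S : Finset α} {r u v : α}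

lemma map_eq (F : FringeFunctional) {e : α ↪ β} {q : α → α} {p : β → β}
    (h : IsFringeEmbedding e q p v) : F p (e v) = F q v :=
  F.map_eq' h

/-- The sum of `F` over the roots of all rooted labelled trees on `k` vertices. -/
noncomputable def treeSum (F : FringeFunctional) (k : ℕ) : ℝ :=
  ∑ v : Fin k, ∑ q ∈ rootedTrees Finset.univ v, F q v

variable [DecidableEq α]

lemma sum_rootedTrees_eq_treeSum (F : FringeFunctional) (S : Finset α) :
    ∑ v ∈ S, ∑ q ∈ rootedTrees S v, F q v = F.treeSum S.card := by
  obtain ⟨e, he⟩ := exists_embedding_map_univ_eq S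
  calc ∑ v ∈ S, ∑ q ∈ rootedTrees S v, F q v
      = ∑ v ∈ Finset.univ.map e, ∑ q ∈ rootedTrees (Finset.univ.map e) v, F q v := by rw [he]
    _ = F.treeSum S.card := by
      rw [Finset.sum_map]
      refine Finset.sum_congr rfl fun a _ => ?_
      rw [sum_rootedTrees_map]
      exact Finset.sum_congr rfl fun q _ => F.map_eq (isFringeEmbedding_pushforward e q a)

lemma hang_eq (F : FringeFunctional) {p q : α → α} (hq : IsRootedTree S v q)
    (hp : IsRootedTree M r p) (hSM : Disjoint S M) : F (hang S v q p u) v = F q v := by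
  refine F.map_eq (e := .refl α) ⟨fun w hw hwv => ?_, ?_⟩
  · exact hang_of_mem q p u (hq.descendants_root ▸ hw) hwv
  · simpa [hq.descendants_root] using descendants_hang hq hp hSM

/-- The total of `F` over the non-root vertices of `p` with fringe subtree of size `k`. -/
noncomputable def fringeSum (F : FringeFunctional) (k : ℕ) (M : Finset α) (r : α) (p : α → α) : ℝ :=
  ∑ v ∈ fringeVertices k M r p, F p v

lemma sum_powersetCard_sum_rootedTrees (F : FringeFunctional) (M : Finset α) (k : ℕ) :
    ∑ S ∈ M.powersetCard k, ∑ v ∈ S, ∑ q ∈ rootedTrees S v, F q v =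
      M.card.choose k * F.treeSum k := by
  rw [← Finset.card_powersetCard, ← nsmul_eq_mul, ← Finset.sum_const]
  refine Finset.sum_congr rfl fun S hS => ?_
  rw [F.sum_rootedTrees_eq_treeSum, (Finset.mem_powersetCard.1 hS).2]

-- Choose the vertex set of the fringe subtree, the fringe subtree, the remaining tree and the
-- point of attachment.
lemma sum_fringeVertices_mul (F : FringeFunctional) (hr : r ∈ M) {k : ℕ} {g : α → ℝ} {c : ℝ}
    (hg : ∀ S ∈ (M.erase r).powersetCard k, ∑ u ∈ M \ S, g u = c) :
    ∑ p ∈ rootedTrees M r, ∑ v ∈ fringeVertices k M r p, g (p v) * F p v =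
      (M.card - 1).choose k * ((M.card - k : ℕ) : ℝ) ^ (M.card - k - 2) * c * F.treeSum k := by
  have hterm : ∀ S ∈ (M.erase r).powersetCard k, ∀ v, ∀ q ∈ rootedTrees S v,
      ∑ p ∈ rootedTrees (M \ S) r, ∑ u ∈ M \ S,
          g (hang S v q p u v) * F (hang S v q p u) v =
        ((M.card - k : ℕ) : ℝ) ^ (M.card - k - 2) * c * F q v := by
    intro S hS v q hq
    obtain ⟨hrS, hcard⟩ := mem_sdiff_and_card_sdiff hr hS
    rw [← hcard, mul_assoc, ← Nat.cast_pow, ← card_rootedTrees hrS, ← nsmul_eq_mul,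
      ← Finset.sum_const]
    refine Finset.sum_congr rfl fun p hp => ?_
    simp only [hang_self, F.hang_eq (mem_rootedTrees.1 hq) (mem_rootedTrees.1 hp)
      Finset.disjoint_sdiff, ← Finset.sum_mul, hg S hS]
  rw [sum_fringeVertices k fun p v => g (p v) * F p v, Finset.sum_congr rfl fun S hS =>
    Finset.sum_congr rfl fun v _ => Finset.sum_congr rfl (hterm S hS v)]
  simp only [← Finset.mul_sum]
  rw [sum_powersetCard_sum_rootedTrees, Finset.card_erase_of_mem hr]
  ring

lemma sum_fringeSum (F : FringeFunctional) (hr : r ∈ M) (k : ℕ) :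
    ∑ p ∈ rootedTrees M r, F.fringeSum k M r p =
      (M.card : ℝ) ^ (M.card - 1) * (fringeRatio k M.card * F.treeSum k) := by
  have hsum := F.sum_fringeVertices_mul hr (k := k) (g := fun _ => 1) fun S hS => by
    rw [Finset.sum_const, nsmul_one, (mem_sdiff_and_card_sdiff hr hS).2]
  simp only [one_mul] at hsum
  change ∑ p ∈ rootedTrees M r, F.fringeSum k M r p = _ at hsum
  rw [hsum, ← mul_assoc, pow_mul_fringeRatio]
  obtain hk | hk := lt_or_ge k M.card
  · have hpow : ((M.card - k : ℕ) : ℝ) ^ (M.card - k - 2) * (M.card - k : ℕ) =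
        ((M.card - k : ℕ) : ℝ) ^ (M.card - k - 1) :=
      mod_cast pow_sub_two_mul_self (Nat.sub_ne_zero_of_lt hk)
    rw [mul_assoc (_ : ℝ) (_ ^ _), hpow]
  · have hM : 0 < M.card := Finset.card_pos.2 ⟨r, hr⟩
    simp [Nat.choose_eq_zero_of_lt (show M.card - 1 < k by omega)]

lemma sum_fringeVertices_filter_apply_eq (F : FringeFunctional) (hr : r ∈ M) (k : ℕ) :
    ∑ p ∈ rootedTrees M r, ∑ v ∈ fringeVertices k M r p with p v = r, F p v =
      (M.card - 1).choose k * ((M.card - k : ℕ) : ℝ) ^ (M.card - k - 2) * F.treeSum k := by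
  have hone : ∀ S ∈ (M.erase r).powersetCard k,
      ∑ u ∈ M \ S, (if u = r then 1 else 0 : ℝ) = 1 := fun S hS => by
    rw [Finset.sum_ite_eq', if_pos (mem_sdiff_and_card_sdiff hr hS).1]
  simpa [Finset.sum_filter] using F.sum_fringeVertices_mul hr hone

end FringeFunctional

/-! ### Second moments and concentration -/

lemma IsRootedTree.disjoint_descendants {α : Type*} [Fintype α] {M : Finset α} {p : α → α}
    {r v w : α} (hp : IsRootedTree M r p) (hv : v ∈ M) (hw : w ∈ M) (hne : v ≠ w)
    (hcard : (descendants p v).card = (descendants p w).card) :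
    Disjoint (descendants p v) (descendants p w) := by
  have hnested : ∀ {x y}, x ∈ M → (descendants p x).card = (descendants p y).card →
      x ∈ descendants p y → x = y := by
    intro x y hx hxy h
    have heq : descendants p x = descendants p y :=
      Finset.eq_of_subset_of_card_le (descendants_subset_descendants h) hxy.ge
    exact eq_of_mem_descendants_of_mem_descendants hp.map_root (hp.mem_descendants_root hx) h
      (heq ▸ self_mem_descendants p y)
  refine Finset.disjoint_left.2 fun x hxv hxw => ?_
  obtain h | h := mem_descendants_total hxv hxw
  · exact hne (hnested hv hcard h)
  · exact hne (hnested hw hcard.symm h).symm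

namespace FringeFunctional

variable {α : Type} [Fintype α] [DecidableEq α] {M S : Finset α} {p q : α → α} {r u v w : α} {k : ℕ}
  {B : ℝ} (F : FringeFunctional)

-- Hanging a tree below `u` changes only the fringe subtrees of the ancestors of `u`.
lemma hang_eq_of_disjoint (hq : IsRootedTree S v q) (hp : IsRootedTree M r p)
    (hSM : Disjoint S M) (hw : w ∈ M) (hdisj : Disjoint S (descendants (hang S v q p u) w)) :
    descendants (hang S v q p u) w = descendants p w ∧ F (hang S v q p u) w = F p w := by
  have hM : ∀ x ∈ M, hang S v q p u x = p x := fun x hx =>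
    hang_of_notMem q p u hq.root_mem (Finset.disjoint_right.1 hSM hx)
  have hS : ∀ x ∈ descendants (hang S v q p u) w, hang S v q p u x = p x := fun x hx =>
    hang_of_notMem q p u hq.root_mem (Finset.disjoint_right.1 hdisj hx)
  have hdesc : descendants (hang S v q p u) w = descendants p w := by
    refine Finset.Subset.antisymm (fun x hx => ?_) fun x hx => ?_
    · exact mem_descendants_of_eqOn hx (fun y hy => apply_mem_descendants hy)
        (fun y hy _ => hS y hy) hx
    · exact mem_descendants_of_eqOn (hp.descendants_subset hw hx) (fun y hy _ => hp.apply_mem hy)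
        (fun y hy _ => (hM y hy).symm) hx
  refine ⟨hdesc, F.map_eq (e := .refl α) ⟨fun x hx _ => ?_, by simpa using hdesc⟩⟩
  exact hS x (hdesc ▸ hx)

-- The fringe subtrees with as many vertices as `S` are pairwise disjoint, so those of the hung tree
-- other than `S` are fringe subtrees of `p`.
lemma fringeSum_hang_le (hF : ∀ w, 0 ≤ F p w) (hq : IsRootedTree S v q) (hp : IsRootedTree M r p)
    (hSM : Disjoint S M) (hu : u ∈ M) :
    F.fringeSum S.card (S ∪ M) r (hang S v q p u) ≤ F q v + F.fringeSum S.card M r p := by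
  have hhang := isRootedTree_hang hq hp hSM hu
  have hSdesc := descendants_hang (u := u) hq hp hSM
  have hvmem : v ∈ fringeVertices S.card (S ∪ M) r (hang S v q p u) := by
    refine Finset.mem_filter.2 ⟨Finset.mem_erase.2
      ⟨?_, Finset.mem_union_left _ hq.root_mem⟩, by rw [hSdesc]⟩
    exact fun h => Finset.disjoint_left.1 hSM hq.root_mem (h ▸ hp.root_mem)
  have hrest : ∀ w ∈ (fringeVertices S.card (S ∪ M) r (hang S v q p u)).erase v,
      w ∈ fringeVertices S.card M r p ∧ F (hang S v q p u) w = F p w := by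
    intro w hw
    obtain ⟨hwv, hw⟩ := Finset.mem_erase.1 hw
    obtain ⟨hw, hcard⟩ := Finset.mem_filter.1 hw
    obtain ⟨hwr, hwSM⟩ := Finset.mem_erase.1 hw
    have hdisj : Disjoint S (descendants (hang S v q p u) w) := by
      have h := hhang.disjoint_descendants (Finset.mem_union_left _ hq.root_mem) hwSM hwv.symm
        (by rw [hcard, hSdesc])
      rwa [hSdesc] at h
    have hwM : w ∈ M := (Finset.mem_union.1 hwSM).resolve_left
      (Finset.disjoint_right.1 hdisj (self_mem_descendants _ w))
    obtain ⟨hdesc, hFw⟩ := F.hang_eq_of_disjoint hq hp hSM hwM hdisj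
    exact ⟨Finset.mem_filter.2 ⟨Finset.mem_erase.2 ⟨hwr, hwM⟩, hdesc ▸ hcard⟩, hFw⟩
  rw [fringeSum, ← Finset.add_sum_erase _ _ hvmem, F.hang_eq hq hp hSM,
    Finset.sum_congr rfl fun w hw => (hrest w hw).2]
  gcongr
  exact Finset.sum_le_sum_of_subset_of_nonneg (fun w hw => (hrest w hw).1) fun w _ _ => hF w

lemma sum_sum_fringeSum_hang_le (hF : ∀ (p : α → α) w, F p w ∈ Set.Icc 0 B)
    (hq : IsRootedTree S v q) (hr : r ∈ M) (hSM : Disjoint S M) :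
    ∑ p ∈ rootedTrees M r, ∑ u ∈ M, F.fringeSum S.card (S ∪ M) r (hang S v q p u) ≤
      (M.card : ℝ) ^ (M.card - 1) *
        (B + M.card * (fringeRatio S.card M.card * F.treeSum S.card)) := by
  calc ∑ p ∈ rootedTrees M r, ∑ u ∈ M, F.fringeSum S.card (S ∪ M) r (hang S v q p u)
      ≤ ∑ p ∈ rootedTrees M r, ∑ _u ∈ M, (B + F.fringeSum S.card M r p) := by
        gcongr with p hp u hu
        refine (F.fringeSum_hang_le (fun w => (hF p w).1) hq (mem_rootedTrees.1 hp) hSM hu).trans ?_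
        gcongr
        exact (hF q v).2
    _ = ((rootedTrees M r).card * M.card : ℕ) * B +
          M.card * ∑ p ∈ rootedTrees M r, F.fringeSum S.card M r p := by
        simp only [Finset.sum_const, nsmul_eq_mul, ← Finset.mul_sum, Finset.sum_add_distrib]
        push_cast
        ring
    _ = _ := by
        rw [card_rootedTrees_mul_card hr, F.sum_fringeSum hr]
        push_cast
        ring

lemma sum_fringeSum_sq_le (hF : ∀ (p : α → α) w, F p w ∈ Set.Icc 0 B) (hr : r ∈ M) (k : ℕ) :
    ∑ p ∈ rootedTrees M r, F.fringeSum k M r p ^ 2 ≤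
      (M.card : ℝ) ^ (M.card - 1) * (fringeRatio k M.card * F.treeSum k) *
        (B + (M.card - k : ℕ) * (fringeRatio k (M.card - k) * F.treeSum k)) := by
  set c : ℝ := B + (M.card - k : ℕ) * (fringeRatio k (M.card - k) * F.treeSum k) with hc
  have hterm : ∀ S ∈ (M.erase r).powersetCard k, ∀ v, ∀ q ∈ rootedTrees S v,
      ∑ p ∈ rootedTrees (M \ S) r, ∑ u ∈ M \ S,
          F (hang S v q p u) v * F.fringeSum k M r (hang S v q p u) ≤
        ((M.card - k : ℕ) : ℝ) ^ (M.card - k - 1) * c * F q v := by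
    intro S hS v q hq
    obtain ⟨hrS, hcard⟩ := mem_sdiff_and_card_sdiff hr hS
    obtain ⟨hSM, rfl⟩ := Finset.mem_powersetCard.1 hS
    have h := F.sum_sum_fringeSum_hang_le hF (mem_rootedTrees.1 hq) hrS Finset.disjoint_sdiff
    rw [Finset.union_sdiff_of_subset (hSM.trans (Finset.erase_subset r M)), hcard, ← hc] at h
    refine le_trans (le_of_eq ?_) (mul_le_mul_of_nonneg_right h (hF q v).1)
    rw [mul_comm, Finset.mul_sum]
    refine Finset.sum_congr rfl fun p hp => ?_
    simp only [F.hang_eq (mem_rootedTrees.1 hq) (mem_rootedTrees.1 hp) Finset.disjoint_sdiff,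
      Finset.mul_sum]
  calc ∑ p ∈ rootedTrees M r, F.fringeSum k M r p ^ 2
      = ∑ p ∈ rootedTrees M r, ∑ v ∈ fringeVertices k M r p, F p v * F.fringeSum k M r p := by
        simp only [sq, fringeSum, ← Finset.sum_mul]
    _ ≤ ∑ S ∈ (M.erase r).powersetCard k, ∑ v ∈ S, ∑ q ∈ rootedTrees S v,
          ((M.card - k : ℕ) : ℝ) ^ (M.card - k - 1) * c * F q v := by
        rw [sum_fringeVertices k fun p v => F p v * F.fringeSum k M r p]
        exact Finset.sum_le_sum fun S hS => Finset.sum_le_sum fun v _ =>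
          Finset.sum_le_sum (hterm S hS v)
    _ = _ := by
        simp only [← Finset.mul_sum]
        rw [sum_powersetCard_sum_rootedTrees, Finset.card_erase_of_mem hr, ← mul_assoc (_ ^ _),
          pow_mul_fringeRatio]
        ring

/-- A bound for the mean of the squared deviation of `F.fringeSum k` from `c * n`, divided by
`n ^ 2`, over the random trees on `n` vertices, when `F` takes values in `[0, B]`. -/
noncomputable def deviationBound (F : FringeFunctional) (B : ℝ) (k n : ℕ) (c : ℝ) : ℝ :=
  fringeRatio k n * F.treeSum k *
    (B / n + (n - k : ℕ) / n * (fringeRatio k (n - k) * F.treeSum k)) -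
    2 * c * (fringeRatio k n * F.treeSum k) + c ^ 2

lemma sum_sq_fringeSum_sub_le (hF : ∀ (p : α → α) w, F p w ∈ Set.Icc 0 B) (hr : r ∈ M) (k : ℕ)
    (c : ℝ) :
    ∑ p ∈ rootedTrees M r, (F.fringeSum k M r p - c * M.card) ^ 2 ≤
      (rootedTrees M r).card * (M.card ^ 2 * F.deviationBound B k M.card c) := by
  have hM : (M.card : ℝ) ≠ 0 := mod_cast Finset.card_ne_zero_of_mem hr
  have hexpand : ∑ p ∈ rootedTrees M r, (F.fringeSum k M r p - c * M.card) ^ 2 =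
      ∑ p ∈ rootedTrees M r, F.fringeSum k M r p ^ 2 -
        2 * c * M.card * ∑ p ∈ rootedTrees M r, F.fringeSum k M r p +
        (rootedTrees M r).card * (c * M.card) ^ 2 := by
    rw [Finset.mul_sum, ← nsmul_eq_mul, ← Finset.sum_const, ← Finset.sum_sub_distrib,
      ← Finset.sum_add_distrib]
    exact Finset.sum_congr rfl fun p _ => by ring
  have hcard : (M.card : ℝ) ^ (M.card - 1) = (rootedTrees M r).card * M.card :=
    mod_cast (card_rootedTrees_mul_card hr).symm
  have hsq := F.sum_fringeSum_sq_le hF hr k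
  rw [hexpand, F.sum_fringeSum hr]
  rw [hcard] at hsq ⊢
  refine (add_le_add_left (sub_le_sub_right hsq _) _).trans (le_of_eq ?_)
  rw [deviationBound]
  field_simp

end FringeFunctional

/-- The limit `e ^ (-k) / k!` of `fringeRatio k n` as `n` tends to infinity. -/
noncomputable def fringeDensity (k : ℕ) : ℝ :=
  Real.exp (-(k : ℝ)) / k.factorial

lemma fringeRatio_eq {k n : ℕ} (hkn : k < n) :
    fringeRatio k n = n.choose k * ((n - k : ℕ) : ℝ) ^ (n - k) / (n : ℝ) ^ n := by
  obtain ⟨m, rfl⟩ := Nat.exists_eq_add_of_lt hkn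
  have hchoose : ((k + m).choose k : ℝ) * (k + m + 1) = (k + m + 1).choose k * (m + 1) := by
    have h := Nat.choose_mul_succ_eq (k + m) k
    rw [add_assoc, Nat.add_sub_cancel_left] at h
    exact_mod_cast h
  have hsub : k + m + 1 - k = m + 1 := by omega
  rw [fringeRatio, hsub, Nat.add_sub_cancel, Nat.add_sub_cancel, div_eq_div_iff (by positivity)
    (by positivity)]
  push_cast
  linear_combination ((m : ℝ) + 1) ^ m * (k + m + 1) ^ (k + m) * hchoose

-- `k ^ k * fringeRatio k n` is the probability of the value `k` under the binomial distribution
-- with parameters `n` and `k / n`.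
lemma tendsto_fringeRatio (k : ℕ) :
    Tendsto (fringeRatio k) atTop (𝓝 (fringeDensity k)) := by
  have hk : (k : ℝ) ^ k ≠ 0 := by exact_mod_cast Nat.pow_self_pos.ne'
  have hmean : Tendsto (fun n : ℕ => n * ((k : ℝ) / n)) atTop (𝓝 k) := by
    refine tendsto_const_nhds.congr' ?_
    filter_upwards [eventually_ne_atTop 0] with n hn
    field_simp
  have hlim := (ProbabilityTheory.tendsto_choose_mul_pow_of_tendsto_mul_atTop k hmean).div_const
    ((k : ℝ) ^ k)
  have hdensity : Real.exp (-(k : ℝ)) * (k : ℝ) ^ k / k.factorial / (k : ℝ) ^ k =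
      fringeDensity k := by
    rw [fringeDensity]
    field_simp
  rw [hdensity] at hlim
  refine hlim.congr' ?_
  filter_upwards [eventually_gt_atTop k] with n hn
  have hn0 : (n : ℝ) ≠ 0 := by exact_mod_cast (Nat.zero_lt_of_lt hn).ne'
  rw [fringeRatio_eq hn, one_sub_div hn0, div_pow, div_pow, ← Nat.cast_sub hn.le,
    ← pow_mul_pow_sub (n : ℝ) hn.le]
  field_simp

lemma FringeFunctional.tendsto_deviationBound (F : FringeFunctional) (B : ℝ) (k : ℕ) :
    Tendsto (fun n => F.deviationBound B k n (fringeDensity k * F.treeSum k)) atTop (𝓝 0) := by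
  set c : ℝ := fringeDensity k * F.treeSum k
  have hmean : Tendsto (fun n => fringeRatio k n * F.treeSum k) atTop (𝓝 c) :=
    (tendsto_fringeRatio k).mul_const _
  have hratio : Tendsto (fun n : ℕ => ((n - k : ℕ) : ℝ) / n) atTop (𝓝 1) := by
    refine (sub_zero (1 : ℝ) ▸ (tendsto_const_nhds (x := (1 : ℝ))).sub
      (tendsto_const_div_atTop_nhds_zero_nat (k : ℝ))).congr' ?_
    filter_upwards [eventually_gt_atTop k] with n hn
    have hn0 : (n : ℝ) ≠ 0 := by exact_mod_cast (Nat.zero_lt_of_lt hn).ne'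
    rw [Nat.cast_sub hn.le, sub_div, div_self hn0]
  have hlim := ((hmean.mul ((tendsto_const_div_atTop_nhds_zero_nat B).add
    (hratio.mul (hmean.comp (tendsto_sub_atTop_nat k))))).sub (hmean.const_mul (2 * c))).add_const
      (c ^ 2)
  exact (show c * (0 + 1 * c) - 2 * c * c + c ^ 2 = 0 by ring) ▸ hlim

section AlmostAllTrees

/-- Asymptotically almost all rooted trees on `n` vertices satisfy `Q`, uniformly in the root. -/
def AlmostAllTrees (Q : ∀ n, Fin n → (Fin n → Fin n) → Prop) : Prop :=
  ∀ η : ℝ, 0 < η → ∀ᶠ n in atTop, ∀ r : Fin n,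
    ((rootedTrees Finset.univ r).filter fun p => ¬Q n r p).card ≤
      η * (rootedTrees (Finset.univ : Finset (Fin n)) r).card

variable {Q Q' : ∀ n, Fin n → (Fin n → Fin n) → Prop}

lemma AlmostAllTrees.mono (hQ : AlmostAllTrees Q)
    (h : ∀ᶠ n in atTop, ∀ (r : Fin n) (p : Fin n → Fin n),
      IsRootedTree Finset.univ r p → Q n r p → Q' n r p) : AlmostAllTrees Q' := by
  intro η hη
  filter_upwards [hQ η hη, h] with n hn hQQ' r
  refine le_trans (Nat.cast_le.2 (Finset.card_le_card fun p hp => ?_)) (hn r)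
  obtain ⟨hp, hQ'⟩ := Finset.mem_filter.1 hp
  exact Finset.mem_filter.2 ⟨hp, fun hQ => hQ' (hQQ' r p (mem_rootedTrees.1 hp) hQ)⟩

lemma AlmostAllTrees.and (hQ : AlmostAllTrees Q) (hQ' : AlmostAllTrees Q') :
    AlmostAllTrees fun n r p => Q n r p ∧ Q' n r p := by
  intro η hη
  filter_upwards [hQ (η / 2) (half_pos hη), hQ' (η / 2) (half_pos hη)] with n hn hn' r
  set A := (rootedTrees Finset.univ r).filter fun p => ¬Q n r p
  set A' := (rootedTrees Finset.univ r).filter fun p => ¬Q' n r p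
  calc _ ≤ ((A ∪ A').card : ℝ) := Nat.cast_le.2 <| Finset.card_le_card fun p hp => by
          simpa only [A, A', ← Finset.filter_or, ← not_and_or, Finset.mem_filter] using hp
    _ ≤ A.card + A'.card := by exact_mod_cast Finset.card_union_le A A'
    _ ≤ η / 2 * (rootedTrees Finset.univ r).card + η / 2 * (rootedTrees Finset.univ r).card :=
        add_le_add (hn r) (hn' r)
    _ = _ := by ring

lemma almostAllTrees_forall_mem {ι : Type*} {s : Finset ι}
    {Q : ι → ∀ n, Fin n → (Fin n → Fin n) → Prop} (h : ∀ i ∈ s, AlmostAllTrees (Q i)) :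
    AlmostAllTrees fun n r p => ∀ i ∈ s, Q i n r p := by
  induction s using Finset.induction_on with
  | empty => exact fun η hη => .of_forall fun n r => by simpa using by positivity
  | insert i s _ ih =>
    simp only [Finset.forall_mem_insert] at h ⊢
    exact h.1.and (ih h.2)

end AlmostAllTrees

lemma card_filter_mul_sq_le_sum_sq {ι : Type*} (s : Finset ι) (f : ι → ℝ) {t : ℝ} (ht : 0 ≤ t) :
    (s.filter fun i => ¬|f i| < t).card * t ^ 2 ≤ ∑ i ∈ s, f i ^ 2 := by
  rw [← nsmul_eq_mul]
  refine (Finset.card_nsmul_le_sum _ (fun i => f i ^ 2) _ fun i hi => ?_).trans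
    (Finset.sum_le_sum_of_subset_of_nonneg (Finset.filter_subset _ s) fun i _ _ => sq_nonneg _)
  exact sq_le_sq.2 (by rw [abs_of_nonneg ht]; exact not_lt.1 (Finset.mem_filter.1 hi).2)

theorem FringeFunctional.almostAllTrees_abs_fringeSum_sub_lt (F : FringeFunctional) {B : ℝ}
    (hF : ∀ n (p : Fin n → Fin n) w, F p w ∈ Set.Icc 0 B) (k : ℕ) {δ : ℝ} (hδ : 0 < δ) :
    AlmostAllTrees fun n r p =>
      |F.fringeSum k Finset.univ r p - fringeDensity k * F.treeSum k * n| < δ * n := by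
  intro η hη
  have hη' : 0 < η * δ ^ 2 := by positivity
  filter_upwards [(F.tendsto_deviationBound B k).eventually_le_const hη', eventually_gt_atTop 0]
    with n hn hn0 r
  have hsq := F.sum_sq_fringeSum_sub_le (hF n) (Finset.mem_univ r) k (fringeDensity k * F.treeSum k)
  rw [Finset.card_fin] at hsq
  have : (0 : ℝ) < n := by exact_mod_cast hn0
  have hcheb := card_filter_mul_sq_le_sum_sq (rootedTrees Finset.univ r)
    (fun p => F.fringeSum k Finset.univ r p - fringeDensity k * F.treeSum k * n)
    (t := δ * n) (by positivity)
  refine le_of_mul_le_mul_right ((hcheb.trans hsq).trans ?_) (by positivity : 0 < (δ * n) ^ 2)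
  calc _ ≤ ((rootedTrees Finset.univ r).card : ℝ) * (n ^ 2 * (η * δ ^ 2)) := by gcongr
    _ = _ := by ring

/-! ### Subtrees with a given top vertex -/

section Children

variable {α : Type*} [Fintype α] {M : Finset α} {p : α → α} {r v w : α}

/-- The children of `v`. The condition `w ≠ v` excludes a root, which is a fixed point of the
parent map, from its own children. -/
noncomputable def children (p : α → α) (v : α) : Finset α :=
  Finset.univ.filter fun w => w ≠ v ∧ p w = v

lemma mem_children : w ∈ children p v ↔ w ≠ v ∧ p w = v := by simp [children]

lemma mem_descendants_of_mem_children (hw : w ∈ children p v) : w ∈ descendants p v :=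
  mem_descendants_of_apply_mem ((mem_children.1 hw).2 ▸ self_mem_descendants p v)

lemma descendants_eq_insert_biUnion (p : α → α) (v : α) :
    descendants p v = insert v ((children p v).biUnion (descendants p)) := by
  ext x
  simp only [Finset.mem_insert, Finset.mem_biUnion]
  refine ⟨fun hx => ?_, ?_⟩
  · induction hx using descendants_induction with
    | top => exact .inl rfl
    | step x _ hxv ih =>
      obtain hpx | ⟨w, hw, hx⟩ := ih
      · exact .inr ⟨x, mem_children.2 ⟨hxv, hpx⟩, self_mem_descendants p x⟩
      · exact .inr ⟨w, hw, mem_descendants_of_apply_mem hx⟩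
  · rintro (rfl | ⟨w, hw, hx⟩)
    · exact self_mem_descendants p x
    · exact descendants_subset_descendants (mem_descendants_of_mem_children hw) hx

namespace IsRootedTree

lemma mem_children_iff (hp : IsRootedTree M r p) :
    w ∈ children p v ↔ (w ∈ M ∧ w ≠ r) ∧ p w = v := by
  rw [mem_children]
  refine and_congr_left fun hw => ⟨fun hwv => ⟨?_, ?_⟩, fun h hwv => ?_⟩
  · by_contra hwM
    exact hwv ((hp.apply_of_notMem w hwM).symm.trans hw)
  · rintro rfl
    exact hwv (hp.map_root.symm.trans hw)
  · exact hp.apply_notMem_descendants h.1 h.2 (by rw [hw, ← hwv]; exact self_mem_descendants p w)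

lemma notMem_descendants_of_mem_children (hp : IsRootedTree M r p) (hw : w ∈ children p v) :
    v ∉ descendants p w := by
  obtain ⟨⟨hwM, hwr⟩, rfl⟩ := hp.mem_children_iff.1 hw
  exact hp.apply_notMem_descendants hwM hwr

lemma pairwiseDisjoint_descendants_children (hp : IsRootedTree M r p) (v : α) :
    (children p v : Set α).PairwiseDisjoint (descendants p) := by
  have hnested : ∀ w ∈ children p v, ∀ w' ∈ children p v, w ∈ descendants p w' → w = w' := by
    intro w hw w' hw' h
    by_contra hne
    exact hp.notMem_descendants_of_mem_children hw'
      ((mem_children.1 hw).2 ▸ apply_mem_descendants h hne)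
  intro w hw w' hw' hne
  refine Finset.disjoint_left.2 fun x hx hx' => hne ?_
  obtain h | h := mem_descendants_total hx hx'
  · exact hnested w hw w' hw' h
  · exact (hnested w' hw' w hw h).symm

lemma card_descendants (hp : IsRootedTree M r p) (v : α) :
    (descendants p v).card = 1 + ∑ w ∈ children p v, (descendants p w).card := by
  rw [descendants_eq_insert_biUnion, Finset.card_insert_of_notMem, Finset.card_biUnion, add_comm]
  · exact hp.pairwiseDisjoint_descendants_children v
  · simp only [Finset.mem_biUnion, not_exists, not_and]
    exact fun w => hp.notMem_descendants_of_mem_children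

end IsRootedTree

end Children

section SubtreesAt

variable {α : Type*} [Fintype α] {M A : Finset α} {p : α → α} {r v w x : α}

/-- `A` is empty or a subtree with top vertex `v`. -/
structure IsParentClosed (p : α → α) (v : α) (A : Finset α) : Prop where
  subset : A ⊆ descendants p v
  apply_mem : ∀ w ∈ A, w ≠ v → p w ∈ A

/-- The vertex sets of the subtrees of `p` with top vertex `v`. -/
noncomputable def subtreesAt (p : α → α) (v : α) : Finset (Finset α) :=
  Finset.univ.filter fun A => v ∈ A ∧ IsParentClosed p v A

/-- The intersections of subtrees with the fringe subtree at `v`, for the subtrees whose top vertex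
is not a proper descendant of `v`: the empty set and the subtrees with top vertex `v`. -/
noncomputable def tracesAt (p : α → α) (v : α) : Finset (Finset α) :=
  Finset.univ.filter (IsParentClosed p v)

lemma mem_subtreesAt : A ∈ subtreesAt p v ↔ v ∈ A ∧ IsParentClosed p v A := by simp [subtreesAt]

lemma mem_tracesAt : A ∈ tracesAt p v ↔ IsParentClosed p v A := by simp [tracesAt]

lemma IsParentClosed.top_mem (hA : IsParentClosed p v A) (hx : x ∈ A) : v ∈ A := by
  induction hA.subset hx using descendants_induction with
  | top => exact hx
  | step x _ hxv ih => exact ih (hA.apply_mem x hx hxv)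

lemma card_tracesAt (p : α → α) (v : α) : (tracesAt p v).card = 1 + (subtreesAt p v).card := by
  have heq : tracesAt p v = insert ∅ (subtreesAt p v) := by
    ext A
    rw [mem_tracesAt, Finset.mem_insert, mem_subtreesAt]
    refine ⟨fun hA => ?_, ?_⟩
    · exact A.eq_empty_or_nonempty.imp_right fun ⟨x, hx⟩ => ⟨hA.top_mem hx, hA⟩
    · rintro (rfl | hA)
      · exact ⟨Finset.empty_subset _, by simp⟩
      · exact hA.2
  rw [heq, Finset.card_insert_of_notMem (by simp [mem_subtreesAt]), add_comm]

lemma card_subtreesAt_pos (p : α → α) (v : α) : 0 < (subtreesAt p v).card := by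
  refine Finset.card_pos.2 ⟨{v}, mem_subtreesAt.2 ⟨Finset.mem_singleton_self v, ?_, ?_⟩⟩
  · exact Finset.singleton_subset_iff.2 (self_mem_descendants p v)
  · exact fun w hw hwv => absurd (Finset.mem_singleton.1 hw) hwv

namespace IsRootedTree

lemma isParentClosed_inter_descendants (hp : IsRootedTree M r p) (hA : IsParentClosed p v A)
    (hw : w ∈ children p v) : IsParentClosed p w (A ∩ descendants p w) := by
  refine ⟨Finset.inter_subset_right, fun x hx hxw => ?_⟩
  obtain ⟨hxA, hxw'⟩ := Finset.mem_inter.1 hx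
  refine Finset.mem_inter.2 ⟨hA.apply_mem x hxA ?_, apply_mem_descendants hxw' hxw⟩
  rintro rfl
  exact hp.notMem_descendants_of_mem_children hw hxw'

lemma inter_descendants_insert_biUnion (hp : IsRootedTree M r p) (f : children p v → Finset α)
    (hf : ∀ w, f w ⊆ descendants p w) (w : children p v) :
    insert v (Finset.univ.biUnion f) ∩ descendants p w = f w := by
  ext x
  simp only [Finset.mem_inter, Finset.mem_insert, Finset.mem_biUnion, Finset.mem_univ, true_and]
  refine ⟨?_, fun hx => ⟨.inr ⟨w, hx⟩, hf w hx⟩⟩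
  rintro ⟨rfl | ⟨w', hx⟩, hxw⟩
  · exact absurd hxw (hp.notMem_descendants_of_mem_children w.2)
  · have hww' : w' = w := Subtype.ext <| by
      by_contra hne
      exact Finset.disjoint_left.1
        (hp.pairwiseDisjoint_descendants_children v w'.2 w.2 hne) (hf w' hx) hxw
    rwa [← hww']

end IsRootedTree

lemma isParentClosed_insert_biUnion {f : children p v → Finset α}
    (hf : ∀ w : children p v, IsParentClosed p w (f w)) :
    IsParentClosed p v (insert v (Finset.univ.biUnion f)) := by
  refine ⟨Finset.insert_subset (self_mem_descendants p v) (Finset.biUnion_subset.2 fun w _ =>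
    (hf w).subset.trans (descendants_subset_descendants (mem_descendants_of_mem_children w.2))),
    fun x hx hxv => ?_⟩
  obtain ⟨w, -, hxw⟩ := Finset.mem_biUnion.1 ((Finset.mem_insert.1 hx).resolve_left hxv)
  by_cases hw : x = w
  · rw [hw, (mem_children.1 w.2).2]
    exact Finset.mem_insert_self ..
  · exact Finset.mem_insert_of_mem
      (Finset.mem_biUnion.2 ⟨w, Finset.mem_univ w, (hf w).apply_mem x hxw hw⟩)

lemma IsParentClosed.insert_biUnion_inter (hA : IsParentClosed p v A) (hv : v ∈ A) :
    insert v (Finset.univ.biUnion fun w : children p v => A ∩ descendants p w) = A := by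
  ext x
  have hx : x ∈ A → x = v ∨ ∃ w ∈ children p v, x ∈ descendants p w := fun h => by
    simpa [descendants_eq_insert_biUnion p v] using hA.subset h
  simp only [Finset.mem_insert, Finset.mem_biUnion, Finset.mem_univ, true_and, Finset.mem_inter,
    Subtype.exists, exists_prop]
  constructor
  · rintro (rfl | ⟨w, -, h, -⟩) <;> assumption
  · exact fun h => (hx h).imp_right fun ⟨w, hw, hxw⟩ => ⟨w, hw, h, hxw⟩

-- A subtree with top vertex `v` is determined by its traces on the fringe subtrees at the children
-- of `v`, and these can be chosen independently.
theorem IsRootedTree.card_subtreesAt (hp : IsRootedTree M r p) (v : α) :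
    (subtreesAt p v).card = ∏ w ∈ children p v, (1 + (subtreesAt p w).card) := by
  simp only [← card_tracesAt]
  rw [← Finset.prod_coe_sort, ← Fintype.card_piFinset fun w : children p v => tracesAt p w]
  refine Finset.card_nbij' (fun A w => A ∩ descendants p w)
    (fun f => insert v (Finset.univ.biUnion f)) ?_ ?_ ?_ ?_
  · intro A hA
    have hA := (mem_subtreesAt.1 hA).2
    exact Fintype.mem_piFinset.2 fun w =>
      mem_tracesAt.2 (hp.isParentClosed_inter_descendants hA w.2)
  · intro f hf
    exact mem_subtreesAt.2 ⟨Finset.mem_insert_self .., isParentClosed_insert_biUnion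
      fun w => mem_tracesAt.1 (Fintype.mem_piFinset.1 hf w)⟩
  · intro A hA
    obtain ⟨hv, hA⟩ := mem_subtreesAt.1 hA
    exact hA.insert_biUnion_inter hv
  · intro f hf
    exact funext (hp.inter_descendants_insert_biUnion f fun w =>
      (mem_tracesAt.1 (Fintype.mem_piFinset.1 hf w)).subset)

lemma IsRootedTree.card_subtreesAt_le_apply (hp : IsRootedTree M r p) (hvM : v ∈ M)
    (hv : v ≠ r) : (subtreesAt p v).card ≤ (subtreesAt p (p v)).card := by
  rw [hp.card_subtreesAt (p v)]
  refine (Nat.le_add_left _ 1).trans ?_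
  exact Finset.single_le_prod' (f := fun w => 1 + (subtreesAt p w).card)
    (fun _ _ => Nat.le_add_right _ _) (hp.mem_children_iff.2 ⟨⟨hvM, hv⟩, rfl⟩)

lemma IsRootedTree.card_subtreesAt_le_root (hp : IsRootedTree M r p) (hv : v ∈ M) :
    (subtreesAt p v).card ≤ (subtreesAt p r).card := by
  induction hp.mem_descendants_root hv using descendants_induction with
  | top => exact le_rfl
  | step x _ hxr ih =>
    exact (hp.card_subtreesAt_le_apply hv hxr).trans (ih (hp.apply_mem hv))

lemma one_add_sum_le_prod_one_add {ι R : Type*} [CommSemiring R] [PartialOrder R] [IsOrderedRing R]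
    {s : Finset ι} {f : ι → R} (hf : ∀ i ∈ s, 0 ≤ f i) : 1 + ∑ i ∈ s, f i ≤ ∏ i ∈ s, (1 + f i) := by
  induction s using Finset.cons_induction with
  | empty => simp
  | cons a s ha ih =>
    rw [Finset.forall_mem_cons] at hf
    have hprod := ih hf.2
    rw [Finset.sum_cons, Finset.prod_cons, one_add_mul, add_left_comm, add_comm (f a)]
    gcongr
    exact le_mul_of_one_le_right hf.1
      (le_trans (le_add_of_nonneg_right (Finset.sum_nonneg hf.2)) hprod)

-- `1 + ∑ a ≤ ∏ (1 + a)` along the recursion `IsRootedTree.card_subtreesAt`.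
lemma IsRootedTree.card_descendants_le_card_subtreesAt (hp : IsRootedTree M r p) (v : α) :
    (descendants p v).card ≤ (subtreesAt p v).card := by
  induction hm : (descendants p v).card using Nat.strong_induction_on generalizing v with
  | _ m ih =>
    have hsum := hp.card_descendants v
    rw [← hm, hsum, hp.card_subtreesAt v]
    refine le_trans ?_ (one_add_sum_le_prod_one_add fun _ _ => Nat.zero_le _)
    gcongr with w hw
    have hle := Finset.single_le_sum (f := fun w => (descendants p w).card)
      (fun _ _ => Nat.zero_le _) hw
    exact ih _ (by omega) w rfl

-- The product of `IsRootedTree.card_subtreesAt` is at least `(1 + a) * (1 + b) ≥ 2 * (a + b)` for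
-- some `a, b ≥ 1` with `1 + a + b` the size of the fringe subtree.
lemma IsRootedTree.two_mul_le_card_subtreesAt (hp : IsRootedTree M r p)
    (hchildren : 2 ≤ (children p v).card) :
    2 * ((descendants p v).card - 1) ≤ (subtreesAt p v).card := by
  obtain ⟨w, hw, w', hw', hne⟩ := Finset.one_lt_card.1 hchildren
  set a := (descendants p w).card
  set b := ∑ w ∈ (children p v).erase w, (descendants p w).card
  have hb : 1 ≤ b := (card_descendants_pos p w').trans_le <|
    Finset.single_le_sum (f := fun w => (descendants p w).card) (fun _ _ => Nat.zero_le _)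
      (Finset.mem_erase.2 ⟨hne.symm, hw'⟩)
  calc 2 * ((descendants p v).card - 1) = 2 * (a + b) := by
        rw [hp.card_descendants, Nat.add_sub_cancel_left, ← Finset.add_sum_erase _ _ hw]
    _ ≤ (1 + a) * (1 + b) := by nlinarith [card_descendants_pos p w]
    _ ≤ (1 + a) * ∏ w ∈ (children p v).erase w, (1 + (descendants p w).card) :=
        Nat.mul_le_mul_left _ (one_add_sum_le_prod_one_add fun _ _ => Nat.zero_le _)
    _ = ∏ w ∈ children p v, (1 + (descendants p w).card) :=
        Finset.mul_prod_erase (children p v) (fun w => 1 + (descendants p w).card) hw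
    _ ≤ (subtreesAt p v).card := by
        rw [hp.card_subtreesAt]
        gcongr with w
        exact hp.card_descendants_le_card_subtreesAt w

lemma IsRootedTree.log_card_subtreesAt (hp : IsRootedTree M r p) (v : α) :
    Real.log (subtreesAt p v).card = ∑ w ∈ children p v, Real.log (tracesAt p w).card := by
  rw [hp.card_subtreesAt v]
  push_cast [card_tracesAt]
  exact Real.log_prod fun w _ => by positivity

/-- The contribution to the logarithm of the number of subtrees at the root of a vertex that is the
top vertex of `x` subtrees. -/
noncomputable def logStep (x : ℝ) : ℝ := Real.log ((x + 1) / x)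

lemma logStep_nonneg {x : ℝ} (hx : 0 ≤ x) : 0 ≤ logStep x := by
  obtain rfl | hx := hx.eq_or_lt
  · simp [logStep]
  · exact Real.log_nonneg ((one_le_div hx).2 (by linarith))

lemma antitoneOn_logStep : AntitoneOn logStep (Set.Ioi 0) := by
  intro x (hx : 0 < x) y (hy : 0 < y) hxy
  refine Real.log_le_log (by positivity) ?_
  rw [div_le_div_iff₀ hy hx]
  nlinarith

lemma logStep_natCast_mem_Icc (m : ℕ) : logStep m ∈ Set.Icc 0 (Real.log 2) := by
  refine ⟨logStep_nonneg m.cast_nonneg, ?_⟩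
  obtain rfl | hm := Nat.eq_zero_or_pos m
  · simpa [logStep] using Real.log_nonneg one_le_two
  · have hm' : (1 : ℝ) ≤ m := by exact_mod_cast hm
    calc logStep m ≤ logStep 1 :=
          antitoneOn_logStep (Set.mem_Ioi.2 one_pos) (Set.mem_Ioi.2 (one_pos.trans_le hm')) hm'
      _ = Real.log 2 := by norm_num [logStep]

lemma logStep_card_subtreesAt (p : α → α) (v : α) :
    logStep (subtreesAt p v).card =
      Real.log (tracesAt p v).card - Real.log (subtreesAt p v).card := by
  have hpos : (0 : ℝ) < (subtreesAt p v).card := by exact_mod_cast card_subtreesAt_pos p v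
  rw [logStep, Real.log_div (by positivity) hpos.ne', card_tracesAt, Nat.cast_add, Nat.cast_one,
    add_comm]

-- Sum the recursion `IsRootedTree.log_card_subtreesAt` over `M`.
lemma IsRootedTree.log_card_subtreesAt_root [DecidableEq α] (hp : IsRootedTree M r p) :
    Real.log (subtreesAt p r).card = ∑ v ∈ M.erase r, logStep (subtreesAt p v).card := by
  have hchildren : ∀ v, children p v = (M.erase r).filter fun w => p w = v := by
    intro v
    ext w
    rw [hp.mem_children_iff, Finset.mem_filter, Finset.mem_erase, and_comm (a := w ∈ M)]
  have htotal : ∑ v ∈ M, Real.log (subtreesAt p v).card =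
      ∑ w ∈ M.erase r, Real.log (tracesAt p w).card := by
    simp only [hp.log_card_subtreesAt, hchildren]
    exact Finset.sum_fiberwise_of_maps_to
      (fun w hw => hp.apply_mem (Finset.mem_of_mem_erase hw)) _
  simp only [logStep_card_subtreesAt, Finset.sum_sub_distrib]
  rw [← htotal, ← Finset.add_sum_erase _ _ hp.root_mem, add_sub_cancel_right]

end SubtreesAt

/-! ### Labelled trees as parent maps -/

section ParentGraph

variable {α : Type*} {p q : α → α} {r v w x y : α}

/-- The graph in which every vertex is joined to its parent under `p`. -/
def parentGraph (p : α → α) : SimpleGraph α := SimpleGraph.fromRel fun x y => p x = y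

lemma parentGraph_adj : (parentGraph p).Adj x y ↔ x ≠ y ∧ (p x = y ∨ p y = x) :=
  SimpleGraph.fromRel_adj ..

variable [Fintype α] {A : Finset α}

lemma connected_induce_of_mem_subtreesAt (hA : A ∈ subtreesAt p v) :
    ((parentGraph p).induce (A : Set α)).Connected := by
  obtain ⟨hv, hA⟩ := mem_subtreesAt.1 hA
  refine SimpleGraph.connected_iff_exists_forall_reachable _ |>.2 ⟨⟨v, hv⟩, fun ⟨x, hx⟩ => ?_⟩
  symm
  induction hA.subset hx using descendants_induction with
  | top => rfl
  | step x _ hxv ih =>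
    have hpx := hA.apply_mem x hx hxv
    obtain hfix | hne := eq_or_ne (p x) x
    · simpa only [hfix] using ih hpx
    · have hadj : ((parentGraph p).induce (A : Set α)).Adj ⟨x, hx⟩ ⟨p x, hpx⟩ :=
        parentGraph_adj.2 ⟨hne.symm, .inl rfl⟩
      exact hadj.reachable.trans (ih hpx)

lemma IsRootedTree.connected_parentGraph (hp : IsRootedTree Finset.univ r p) :
    (parentGraph p).Connected := by
  have huniv : Finset.univ ∈ subtreesAt p r := mem_subtreesAt.2
    ⟨Finset.mem_univ r, hp.descendants_root.ge, fun _ _ _ => Finset.mem_univ _⟩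
  have hconn := connected_induce_of_mem_subtreesAt huniv
  rw [Finset.coe_univ] at hconn
  exact (SimpleGraph.induceUnivIso (parentGraph p)).connected_iff.1 hconn

lemma edgeSet_parentGraph_subset (hr : p r = r) :
    (parentGraph p).edgeSet ⊆
      ((Finset.univ.erase r).image fun x => s(x, p x) : Finset (Sym2 α)) := by
  have hedge : ∀ x y, x ≠ y → p x = y → ∃ z ≠ r, s(z, p z) = s(x, y) := by
    rintro x _ hne rfl
    exact ⟨x, fun h => hne (by rw [h, hr]), rfl⟩
  intro e
  induction e using Sym2.ind with
  | _ x y =>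
    intro h
    obtain ⟨hne, hxy | hyx⟩ := parentGraph_adj.1 h
    · simpa using hedge x y hne hxy
    · simpa [Sym2.eq_swap] using hedge y x hne.symm hyx

lemma IsRootedTree.isTree_parentGraph (hp : IsRootedTree Finset.univ r p) :
    (parentGraph p).IsTree := by
  have hconn := hp.connected_parentGraph
  refine SimpleGraph.isTree_iff_connected_and_card.2
    ⟨hconn, le_antisymm ?_ hconn.card_vert_le_card_edgeSet_add_one⟩
  calc Nat.card (parentGraph p).edgeSet + 1
      ≤ ((Finset.univ.erase r).image fun x => s(x, p x)).card + 1 := by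
        rw [Nat.card_coe_set_eq, ← Set.ncard_coe_finset]
        gcongr
        exacts [Finset.finite_toSet _, edgeSet_parentGraph_subset hp.map_root]
    _ ≤ (Finset.univ.erase r).card + 1 := by gcongr; exact Finset.card_image_le
    _ = Nat.card α := by
        rw [Finset.card_erase_add_one (Finset.mem_univ r), Finset.card_univ,
          Nat.card_eq_fintype_card]

lemma IsRootedTree.eq_of_parentGraph_eq (hp : IsRootedTree Finset.univ r p)
    (hq : IsRootedTree Finset.univ r q) (h : parentGraph p = parentGraph q) : p = q := by
  funext x
  induction hp.mem_descendants_root (Finset.mem_univ x) using descendants_induction with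
  | top => rw [hp.map_root, hq.map_root]
  | step x _ hxr ih =>
    have hnotMem := hp.apply_notMem_descendants (Finset.mem_univ x) hxr
    have hne : x ≠ p x := fun h => hnotMem (h ▸ self_mem_descendants p x)
    have hadj : (parentGraph q).Adj x (p x) := h ▸ parentGraph_adj.2 ⟨hne, .inl rfl⟩
    obtain hx | hx := (parentGraph_adj.1 hadj).2
    · exact hx.symm
    · rw [← ih] at hx
      exact absurd (mem_descendants.2 ⟨1, hx⟩) hnotMem

-- The parent of a vertex other than the root is a neighbour closer to the root.
lemma exists_isRootedTree_parentGraph_eq {G : SimpleGraph α} (hG : G.IsTree) (r : α) :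
    ∃ p, IsRootedTree Finset.univ r p ∧ parentGraph p = G := by
  have hcloser : ∀ x, ∃ y, x ≠ r → G.Adj x y ∧ G.dist y r < G.dist x r := by
    intro x
    obtain ⟨walk, hwalk⟩ := hG.connected.exists_walk_length_eq_dist x r
    cases walk with
    | nil => exact ⟨r, fun h => absurd rfl h⟩
    | @cons _ y _ hadj walk =>
      refine ⟨y, fun _ => ⟨hadj, ?_⟩⟩
      rw [← hwalk, SimpleGraph.Walk.length_cons]
      exact Nat.lt_succ_of_le (SimpleGraph.dist_le walk)
  choose f hf using hcloser
  set p := Function.update f r r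
  have hpr : p r = r := Function.update_self ..
  have hpf : ∀ x ≠ r, p x = f x := fun x hx => Function.update_of_ne hx ..
  have hroot : ∀ x, x ∈ descendants p r := by
    intro x
    induction hd : G.dist x r using Nat.strong_induction_on generalizing x with
    | _ d ih =>
      obtain rfl | hx := eq_or_ne x r
      · exact self_mem_descendants p x
      · refine mem_descendants_of_apply_mem (ih _ ?_ (p x) rfl)
        rw [hpf x hx, ← hd]
        exact (hf x hx).2
  have hadj : ∀ x y, x ≠ y → p x = y → G.Adj x y := by
    rintro x _ hne rfl
    have hx : x ≠ r := fun h => hne (by rw [h, hpr])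
    exact hpf x hx ▸ (hf x hx).1
  have hle : parentGraph p ≤ G := fun x y h => by
    obtain ⟨hne, hxy | hyx⟩ := parentGraph_adj.1 h
    exacts [hadj x y hne hxy, (hadj y x hne.symm hyx).symm]
  have hp : IsRootedTree Finset.univ r p := ⟨hpr, by simp, Finset.eq_univ_of_forall hroot⟩
  exact ⟨p, hp, hle.antisymm
    ((SimpleGraph.isTree_iff_minimal_connected.1 hG).2 hp.connected_parentGraph hle)⟩

lemma sum_isTree [DecidableEq α] {N : Type*} [AddCommMonoid N] (r : α) (f : SimpleGraph α → N) :
    ∑ G : SimpleGraph α with G.IsTree, f G =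
      ∑ p ∈ rootedTrees Finset.univ r, f (parentGraph p) := by
  symm
  refine Finset.sum_nbij parentGraph ?_ ?_ ?_ fun _ _ => rfl
  · intro p hp
    simpa using (mem_rootedTrees.1 hp).isTree_parentGraph
  · intro p hp q hq h
    exact (mem_rootedTrees.1 hp).eq_of_parentGraph_eq (mem_rootedTrees.1 hq) h
  · intro G hG
    obtain ⟨p, hp, h⟩ := exists_isRootedTree_parentGraph_eq (Finset.mem_filter.1 hG).2 r
    exact ⟨p, mem_rootedTrees.2 hp, h⟩

-- The only edge leaving the fringe subtree at `w` joins `w` to its parent.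
lemma apply_mem_of_connected_induce {S : Set α} {u : α}
    (hS : ((parentGraph p).induce S).Connected) (hw : w ∈ S) (hu : u ∈ S)
    (huw : u ∉ descendants p w) : p w ∈ S := by
  obtain ⟨walk⟩ := hS.preconnected ⟨w, hw⟩ ⟨u, hu⟩
  obtain ⟨⟨⟨x, y⟩, hadj⟩, -, (hx : x.1 ∈ descendants p w), (hy : y.1 ∉ descendants p w)⟩ :=
    walk.exists_boundary_dart {x | x.1 ∈ descendants p w} (self_mem_descendants p w) huw
  obtain ⟨-, (hxy : p x = y) | (hyx : p y = x)⟩ := parentGraph_adj.1 hadj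
  · obtain hxw | hxw := mem_descendants_iff_eq_or_apply_mem.1 hx
    · rw [← hxw, hxy]
      exact y.2
    · exact absurd (hxy ▸ hxw) hy
  · exact absurd (mem_descendants_of_apply_mem (hyx ▸ hx)) hy

namespace IsRootedTree

lemma mem_subtreesAt_of_connected_induce (hp : IsRootedTree Finset.univ r p)
    (hA : ((parentGraph p).induce (A : Set α)).Connected) (hv : v ∈ A)
    (hsub : A ⊆ descendants p v) : A ∈ subtreesAt p v := by
  refine mem_subtreesAt.2 ⟨hv, hsub, fun w hw hwv => ?_⟩
  refine apply_mem_of_connected_induce hA (Finset.mem_coe.2 hw) (Finset.mem_coe.2 hv) fun h => ?_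
  exact hwv (eq_of_mem_descendants_of_mem_descendants hp.map_root
    (hp.mem_descendants_root (Finset.mem_univ w)) (hsub hw) h)

-- The top vertex is the one with the most descendants.
lemma exists_mem_subtreesAt (hp : IsRootedTree Finset.univ r p)
    (hA : ((parentGraph p).induce (A : Set α)).Connected) : ∃ v, A ∈ subtreesAt p v := by
  obtain ⟨x, hx⟩ := hA.nonempty
  obtain ⟨v, hv, hmax⟩ := A.exists_max_image (fun v => (descendants p v).card) ⟨x, hx⟩
  refine ⟨v, hp.mem_subtreesAt_of_connected_induce hA hv fun u hu => ?_⟩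
  by_contra huv
  have hvr : v ≠ r := by
    rintro rfl
    exact huv (hp.mem_descendants_root (Finset.mem_univ u))
  have hpv : p v ∈ A := apply_mem_of_connected_induce hA (Finset.mem_coe.2 hv) hu huv
  have hsub : descendants p v ⊆ descendants p (p v) :=
    descendants_subset_descendants (mem_descendants_of_apply_mem (self_mem_descendants p (p v)))
  apply hp.apply_notMem_descendants (Finset.mem_univ v) hvr
  rw [Finset.eq_of_subset_of_card_le hsub (hmax _ hpv)]
  exact self_mem_descendants p (p v)

end IsRootedTree

lemma natCard_subtype_set (P : Set α → Prop) [DecidablePred fun A : Finset α => P A] :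
    Nat.card {S : Set α // P S} = (Finset.univ.filter fun A : Finset α => P A).card := by
  rw [← Fintype.card_subtype, ← Nat.card_eq_fintype_card]
  exact (Nat.card_congr (Fintype.finsetEquivSet.subtypeEquiv fun _ => Iff.rfl)).symm

end ParentGraph

section Subtrees

variable {n : ℕ} {r : Fin n} {p : Fin n → Fin n}

lemma IsRootedTree.gval_parentGraph (hp : IsRootedTree Finset.univ r p) :
    gval (parentGraph p) r = 1 + (subtreesAt p r).card := by
  rw [gval, natCard_subtype_set]
  congr 2
  ext A
  rw [Finset.mem_filter]
  refine ⟨fun ⟨_, hr, hA⟩ => ?_, fun hA => ?_⟩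
  · exact hp.mem_subtreesAt_of_connected_induce hA hr
      fun x _ => hp.mem_descendants_root (Finset.mem_univ x)
  · exact ⟨Finset.mem_univ A, (mem_subtreesAt.1 hA).1, connected_induce_of_mem_subtreesAt hA⟩

lemma IsRootedTree.subtreeCount_parentGraph_le (hp : IsRootedTree Finset.univ r p) :
    subtreeCount (parentGraph p) ≤ n * (subtreesAt p r).card := by
  rw [subtreeCount, natCard_subtype_set]
  calc _ ≤ (Finset.univ.biUnion (subtreesAt p)).card := by
        refine Finset.card_le_card fun A hA => ?_
        obtain ⟨v, hv⟩ := hp.exists_mem_subtreesAt (Finset.mem_filter.1 hA).2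
        exact Finset.mem_biUnion.2 ⟨v, Finset.mem_univ v, hv⟩
    _ ≤ ∑ v : Fin n, (subtreesAt p v).card := Finset.card_biUnion_le
    _ ≤ ∑ _v : Fin n, (subtreesAt p r).card :=
        Finset.sum_le_sum fun v _ => hp.card_subtreesAt_le_root (Finset.mem_univ v)
    _ = n * (subtreesAt p r).card := by simp

-- Every tree arises from exactly one parent map with root `r`.
lemma treeProb_eq (r : Fin n) (P : SimpleGraph (Fin n) → Prop) :
    treeProb n P = ((rootedTrees Finset.univ r).filter fun p => P (parentGraph p)).card /
      (rootedTrees (Finset.univ : Finset (Fin n)) r).card := by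
  have hcard : ∀ Q : SimpleGraph (Fin n) → Prop,
      Nat.card {G : SimpleGraph (Fin n) // G.IsTree ∧ Q G} =
        ((rootedTrees Finset.univ r).filter fun p => Q (parentGraph p)).card := by
    intro Q
    rw [Nat.card_eq_fintype_card, Fintype.card_subtype, ← Finset.filter_filter, Finset.card_filter,
      Finset.card_filter, sum_isTree r]
  have htrees := hcard fun _ => True
  simp only [and_true, Finset.filter_true] at htrees
  rw [treeProb, hcard, htrees]

lemma AlmostAllTrees.tendsto_treeProb {P : ∀ n, SimpleGraph (Fin n) → Prop}
    (hP : AlmostAllTrees fun n _ p => P n (parentGraph p)) :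
    Tendsto (fun n => treeProb n (P n)) atTop (𝓝 1) := by
  rw [Metric.tendsto_nhds]
  intro ε hε
  filter_upwards [hP (ε / 2) (half_pos hε), eventually_gt_atTop 0] with n hn hn0
  let r : Fin n := ⟨0, hn0⟩
  set N := (rootedTrees (Finset.univ : Finset (Fin n)) r).card with hN
  set bad := ((rootedTrees Finset.univ r).filter fun p => ¬P n (parentGraph p)).card with hbad
  have hN0 : (0 : ℝ) < N := by
    rw [hN, card_rootedTrees (Finset.mem_univ r), Finset.card_univ, Fintype.card_fin]
    positivity
  have hsplit : (((rootedTrees Finset.univ r).filter fun p => P n (parentGraph p)).card : ℝ) =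
      N - bad := by
    rw [eq_sub_iff_add_eq]
    exact_mod_cast Finset.card_filter_add_card_filter_not (s := rootedTrees Finset.univ r)
      fun p => P n (parentGraph p)
  rw [treeProb_eq r, hsplit, sub_div, div_self hN0.ne', dist_self_sub_left, Real.norm_of_nonneg
    (by positivity), div_lt_iff₀ hN0]
  nlinarith [hn r]

end Subtrees

/-! ### The fringe functionals and the logarithms of the constants -/

namespace IsFringeEmbedding

variable {α β : Type*} [Fintype α] [Fintype β] {e : α ↪ β} {q : α → α} {p : β → β} {v : α}
  {A : Finset α}

lemma card_descendants (h : IsFringeEmbedding e q p v) :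
    (descendants p (e v)).card = (descendants q v).card := by
  rw [h.descendants_map, Finset.card_map]

lemma children_map (h : IsFringeEmbedding e q p v) :
    children p (e v) = (children q v).map e := by
  have hchild : ∀ w ∈ descendants q v, e w ∈ children p (e v) ↔ w ∈ children q v := by
    intro w hw
    simp only [mem_children, e.injective.ne_iff]
    exact and_congr_right fun hwv => by rw [h.apply_parent w hw hwv, e.apply_eq_iff_eq]
  ext b
  rw [Finset.mem_map]
  constructor
  · intro hb
    have hbd := mem_descendants_of_mem_children hb
    rw [h.descendants_map] at hbd
    obtain ⟨w, hw, rfl⟩ := Finset.mem_map.1 hbd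
    exact ⟨w, (hchild w hw).1 hb, rfl⟩
  · rintro ⟨w, hw, rfl⟩
    exact (hchild w (mem_descendants_of_mem_children hw)).2 hw

lemma isParentClosed_map_iff (h : IsFringeEmbedding e q p v) :
    IsParentClosed p (e v) (A.map e) ↔ IsParentClosed q v A := by
  have hsubset : A.map e ⊆ descendants p (e v) ↔ A ⊆ descendants q v := by
    rw [h.descendants_map, Finset.map_subset_map]
  have happly : A ⊆ descendants q v → ∀ w ∈ A, w ≠ v → (p (e w) ∈ A.map e ↔ q w ∈ A) :=
    fun hA w hw hwv => by rw [h.apply_parent w (hA hw) hwv, Finset.mem_map']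
  refine ⟨fun hA => ⟨hsubset.1 hA.subset, fun w hw hwv => ?_⟩,
    fun hA => ⟨hsubset.2 hA.subset, fun b hb hbv => ?_⟩⟩
  · exact (happly (hsubset.1 hA.subset) w hw hwv).1
      (hA.apply_mem _ (Finset.mem_map_of_mem e hw) (e.injective.ne hwv))
  · obtain ⟨w, hw, rfl⟩ := Finset.mem_map.1 hb
    have hwv := ne_of_apply_ne e hbv
    exact (happly hA.subset w hw hwv).2 (hA.apply_mem w hw hwv)

lemma subtreesAt_map (h : IsFringeEmbedding e q p v) :
    subtreesAt p (e v) = (subtreesAt q v).map (Finset.mapEmbedding e).toEmbedding := by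
  ext B
  simp only [Finset.mem_map, mem_subtreesAt, RelEmbedding.coe_toEmbedding,
    Finset.mapEmbedding_apply]
  constructor
  · rintro ⟨hv, hB⟩
    obtain ⟨A, -, rfl⟩ := Finset.subset_map_iff.1 (h.descendants_map ▸ hB.subset)
    exact ⟨A, ⟨(Finset.mem_map' e).1 hv, h.isParentClosed_map_iff.1 hB⟩, rfl⟩
  · rintro ⟨A, ⟨hv, hA⟩, rfl⟩
    exact ⟨Finset.mem_map_of_mem e hv, h.isParentClosed_map_iff.2 hA⟩

lemma card_subtreesAt (h : IsFringeEmbedding e q p v) :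
    (subtreesAt p (e v)).card = (subtreesAt q v).card := by
  rw [h.subtreesAt_map, Finset.card_map]

lemma card_children (h : IsFringeEmbedding e q p v) :
    (children p (e v)).card = (children q v).card := by
  rw [h.children_map, Finset.card_map]

end IsFringeEmbedding

section LowerCount

variable {α : Type*} [Fintype α] {M : Finset α} {p : α → α} {r : α} {K : ℕ}

/-- A lower bound for the number of subtrees with top vertex `v`: exact if the fringe subtree at `v`
has at most `K` vertices, and otherwise depending only on its size and on whether `v` has exactly
one child. -/
noncomputable def lowerCount (K : ℕ) (p : α → α) (v : α) : ℕ :=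
  if (descendants p v).card ≤ K then (subtreesAt p v).card
  else if (children p v).card = 1 then (descendants p v).card
  else 2 * ((descendants p v).card - 1)

lemma IsRootedTree.sum_card_descendants_children (hp : IsRootedTree M r p) :
    ∑ v ∈ children p r, (descendants p v).card = M.card - 1 := by
  rw [← hp.descendants_root, hp.card_descendants, Nat.add_sub_cancel_left]

lemma lowerCount_pos (hK : 1 ≤ K) (p : α → α) (v : α) : 0 < lowerCount K p v := by
  have := card_subtreesAt_pos p v
  rw [lowerCount]
  split_ifs <;> omega

lemma IsRootedTree.lowerCount_le_card_subtreesAt (hp : IsRootedTree M r p) (K : ℕ) (v : α) :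
    lowerCount K p v ≤ (subtreesAt p v).card := by
  rw [lowerCount]
  split_ifs with _ hchild
  · exact le_rfl
  · exact hp.card_descendants_le_card_subtreesAt v
  · obtain hleaf | hbranch : (children p v).card = 0 ∨ 2 ≤ (children p v).card := by omega
    · rw [hp.card_descendants, Finset.card_eq_zero.1 hleaf]
      exact Nat.zero_le _
    · exact hp.two_mul_le_card_subtreesAt hbranch

end LowerCount

lemma mul_choose_pred {k l : ℕ} (hkl : k < l) :
    l * (l - 1).choose k = (l - k) * l.choose (l - k) := by
  rw [Nat.choose_symm hkl.le]
  obtain ⟨m, rfl⟩ := Nat.exists_eq_add_of_lt hkl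
  rw [Nat.add_sub_cancel, Nat.add_one_mul_choose_eq, Nat.choose_succ_right_eq, mul_comm]

lemma card_filter_eq_sum {ι : Type*} {s : Finset ι} {f : ι → ℕ} (hf : ∀ i ∈ s, 0 < f i) :
    (s.filter fun i => f i = ∑ j ∈ s, f j).card = if s.card = 1 then 1 else 0 := by
  split_ifs with hs
  · obtain ⟨i, rfl⟩ := Finset.card_eq_one.1 hs
    rw [Finset.sum_singleton, Finset.filter_true_of_mem (by simp), Finset.card_singleton]
  · rw [Finset.card_eq_zero, Finset.filter_eq_empty_iff]
    intro i hi hsum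
    have hcard : 1 < s.card := (Nat.succ_le_of_lt (Finset.card_pos.2 ⟨i, hi⟩)).lt_of_ne' hs
    obtain ⟨j, hj, hji⟩ := Finset.exists_mem_ne hcard i
    exact (Finset.single_lt_sum hji hi hj (hf j hj) fun _ _ _ => Nat.zero_le _).ne hsum

namespace FringeFunctional

/-- The constant functional `1`, which counts fringe subtrees. -/
noncomputable def one : FringeFunctional where
  toFun _ _ := 1
  map_eq' _ := rfl

/-- The indicator of the vertices with exactly one child. -/
noncomputable def singleChild : FringeFunctional where
  toFun p v := if (children p v).card = 1 then 1 else 0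
  map_eq' h := by rw [h.card_children]

/-- The logarithm of the number of subtrees with top vertex `v`. -/
noncomputable def logSubtreesAt : FringeFunctional where
  toFun p v := Real.log (subtreesAt p v).card
  map_eq' h := by rw [h.card_subtreesAt]

/-- The logarithm of the number of traces on the fringe subtree at `v`, which is `log g(T,v)` for
the fringe subtree `T` at `v`. -/
noncomputable def logTracesAt : FringeFunctional where
  toFun p v := Real.log (tracesAt p v).card
  map_eq' h := by simp only [card_tracesAt, h.card_subtreesAt]

/-- The upper bound for the contribution of `v` obtained from `lowerCount`. -/
noncomputable def logStepLowerCount (K : ℕ) : FringeFunctional where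
  toFun p v := logStep (lowerCount K p v)
  map_eq' h := by
    simp only [lowerCount, h.card_descendants, h.card_children, h.card_subtreesAt]

lemma one_apply {α : Type} [Fintype α] (p : α → α) (v : α) : one p v = 1 := rfl

lemma singleChild_apply {α : Type} [Fintype α] (p : α → α) (v : α) :
    singleChild p v = if (children p v).card = 1 then 1 else 0 := rfl

lemma logSubtreesAt_apply {α : Type} [Fintype α] (p : α → α) (v : α) :
    logSubtreesAt p v = Real.log (subtreesAt p v).card := rfl

lemma logTracesAt_apply {α : Type} [Fintype α] (p : α → α) (v : α) :
    logTracesAt p v = Real.log (tracesAt p v).card := rfl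

lemma logStepLowerCount_apply {α : Type} [Fintype α] (K : ℕ) (p : α → α) (v : α) :
    logStepLowerCount K p v = logStep (lowerCount K p v) := rfl

lemma treeSum_one {k : ℕ} (hk : k ≠ 0) : one.treeSum k = (k : ℝ) ^ (k - 1) := by
  have hcard : ∀ v : Fin k, (rootedTrees Finset.univ v).card = k ^ (k - 2) := fun v => by
    rw [card_rootedTrees (Finset.mem_univ v), Finset.card_univ, Fintype.card_fin]
  simp only [treeSum, one_apply, Finset.sum_const, hcard, nsmul_one, Finset.card_univ,
    Fintype.card_fin]
  rw [nsmul_eq_mul, mul_comm]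
  exact_mod_cast pow_sub_two_mul_self hk

lemma sum_rootedTrees_sum_children (F : FringeFunctional) {k l : ℕ} (hkl : k < l) :
    ∑ r : Fin l, ∑ p ∈ rootedTrees Finset.univ r,
        ∑ v ∈ children p r with (descendants p v).card = k, F p v =
      ((l - k : ℕ) : ℝ) ^ (l - k - 1) * l.choose (l - k) * F.treeSum k := by
  have hchildren : ∀ (r : Fin l) (p : Fin l → Fin l),
      ((children p r).filter fun v => (descendants p v).card = k) =
        (fringeVertices k Finset.univ r p).filter fun v => p v = r := by
    intro r p
    ext v
    simp only [fringeVertices, Finset.mem_filter, mem_children, Finset.mem_erase, Finset.mem_univ,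
      and_true]
    tauto
  have hcoeff : (l * ((l - 1).choose k * (l - k) ^ (l - k - 2)) : ℕ) =
      (l - k) ^ (l - k - 1) * l.choose (l - k) := by
    rw [← mul_assoc, mul_choose_pred hkl, ← pow_sub_two_mul_self (Nat.sub_ne_zero_of_lt hkl)]
    ring
  simp only [hchildren, F.sum_fringeVertices_filter_apply_eq (Finset.mem_univ _),
    Finset.sum_const, Finset.card_univ, Fintype.card_fin, nsmul_eq_mul]
  rw [← mul_assoc]
  congr 1
  exact_mod_cast hcoeff

-- The root has exactly one child if and only if some child has a fringe subtree with `k - 1`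
-- vertices.
lemma treeSum_singleChild {k : ℕ} (hk : 2 ≤ k) :
    singleChild.treeSum k = ((k * (k - 1) ^ (k - 2) : ℕ) : ℝ) := by
  have hsingle : ∀ (r : Fin k), ∀ p ∈ rootedTrees Finset.univ r, singleChild p r =
      ∑ v ∈ children p r with (descendants p v).card = k - 1, one p v := by
    intro r p hp
    have hcard := card_filter_eq_sum (s := children p r) fun v _ => card_descendants_pos p v
    rw [(mem_rootedTrees.1 hp).sum_card_descendants_children, Finset.card_univ, Fintype.card_fin]
      at hcard
    simp only [one_apply, Finset.sum_const, hcard, nsmul_one, singleChild_apply, Nat.cast_ite,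
      Nat.cast_one, Nat.cast_zero]
  rw [treeSum, Finset.sum_congr rfl fun r _ => Finset.sum_congr rfl (hsingle r),
    one.sum_rootedTrees_sum_children (by omega), treeSum_one (by omega)]
  simp [show k - (k - 1) = 1 by omega, Nat.sub_sub]

-- Sum the recursion `IsRootedTree.log_card_subtreesAt` at the root over all rooted trees.
lemma treeSum_logSubtreesAt (l : ℕ) :
    logSubtreesAt.treeSum l = ∑ k ∈ Finset.Icc 1 (l - 1),
      ((l - k : ℕ) : ℝ) ^ (l - k - 1) * l.choose (l - k) * logTracesAt.treeSum k := by
  have hrec : ∀ (r : Fin l), ∀ p ∈ rootedTrees Finset.univ r, logSubtreesAt p r =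
      ∑ k ∈ Finset.Icc 1 (l - 1),
        ∑ v ∈ children p r with (descendants p v).card = k, logTracesAt p v := by
    intro r p hp
    have hp := mem_rootedTrees.1 hp
    rw [logSubtreesAt_apply, hp.log_card_subtreesAt]
    have hsum := hp.sum_card_descendants_children
    rw [Finset.card_univ, Fintype.card_fin] at hsum
    refine (Finset.sum_fiberwise_of_maps_to (fun v hv => ?_) _).symm
    refine Finset.mem_Icc.2 ⟨card_descendants_pos p v, hsum ▸ ?_⟩
    exact Finset.single_le_sum (f := fun v => (descendants p v).card) (fun _ _ => Nat.zero_le _) hv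
  rw [treeSum, Finset.sum_congr rfl fun r _ => Finset.sum_congr rfl (hrec r)]
  simp only [Finset.sum_comm (t := Finset.Icc 1 (l - 1))]
  refine Finset.sum_congr rfl fun k hk => logTracesAt.sum_rootedTrees_sum_children ?_
  have := Finset.mem_Icc.1 hk
  omega

end FringeFunctional

section Constants

open FringeFunctional

variable {K Khat : ℕ}

lemma log_prod_rpow {ι : Type*} {s : Finset ι} {f g : ι → ℝ} (hf : ∀ i ∈ s, 0 < f i) :
    Real.log (∏ i ∈ s, f i ^ g i) = ∑ i ∈ s, g i * Real.log (f i) := by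
  rw [Real.log_prod fun i hi => (Real.rpow_pos_of_pos (hf i hi) _).ne']
  exact Finset.sum_congr rfl fun i hi => Real.log_rpow (hf i hi) _

lemma treeSum_logStepLowerCount_of_le {k : ℕ} (hk : k ≤ K) :
    (logStepLowerCount K).treeSum k = logTracesAt.treeSum k - logSubtreesAt.treeSum k := by
  simp only [treeSum, ← Finset.sum_sub_distrib]
  refine Finset.sum_congr rfl fun v _ => Finset.sum_congr rfl fun q hq => ?_
  have hcard : (descendants q v).card ≤ K := by
    rwa [(mem_rootedTrees.1 hq).descendants_root, Finset.card_univ, Fintype.card_fin]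
  rw [logStepLowerCount_apply, lowerCount, if_pos hcard, logStep_card_subtreesAt]
  rfl

lemma treeSum_logStepLowerCount_of_lt {k : ℕ} (hk : K < k) (hk2 : 2 ≤ k) :
    (logStepLowerCount K).treeSum k =
      ((k * (k - 1) ^ (k - 2) : ℕ) : ℝ) * logStep k +
      ((k ^ (k - 1) - k * (k - 1) ^ (k - 2) : ℕ) : ℝ) * logStep (2 * (k - 1) : ℕ) := by
  have hsplit : (logStepLowerCount K).treeSum k = singleChild.treeSum k * logStep k +
      (one.treeSum k - singleChild.treeSum k) * logStep (2 * (k - 1) : ℕ) := by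
    simp only [treeSum, ← Finset.sum_sub_distrib, Finset.sum_mul, ← Finset.sum_add_distrib]
    refine Finset.sum_congr rfl fun v _ => Finset.sum_congr rfl fun q hq => ?_
    have hcard : (descendants q v).card = k := by
      rw [(mem_rootedTrees.1 hq).descendants_root, Finset.card_univ, Fintype.card_fin]
    rw [logStepLowerCount_apply, lowerCount, hcard, if_neg hk.not_ge, singleChild_apply, one_apply]
    split_ifs <;> simp
  have hle : singleChild.treeSum k ≤ one.treeSum k :=
    Finset.sum_le_sum fun v _ => Finset.sum_le_sum fun q _ => by
      rw [singleChild_apply, one_apply]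
      split_ifs <;> simp
  rw [treeSum_singleChild hk2, treeSum_one (by omega)] at hsplit hle
  rw [hsplit, Nat.cast_sub (by exact_mod_cast hle)]
  push_cast
  rfl

-- Insert `treeSum_logSubtreesAt` and exchange the order of summation.
lemma sum_fringeDensity_mul_treeSum_sub (K : ℕ) :
    ∑ k ∈ Finset.Icc 1 K, fringeDensity k * (logTracesAt.treeSum k - logSubtreesAt.treeSum k) =
      ∑ k ∈ Finset.Icc 1 K, fK K k * logTracesAt.treeSum k := by
  simp only [mul_sub, Finset.sum_sub_distrib, treeSum_logSubtreesAt, fK, sub_mul, Finset.mul_sum,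
    Finset.sum_mul]
  congr 1
  rw [Finset.sum_comm' (t' := Finset.Icc 1 K) (s' := fun k => Finset.Icc (k + 1) K)]
  · refine Finset.sum_congr rfl fun k _ => Finset.sum_congr rfl fun l _ => ?_
    rw [fringeDensity]
    ring
  · intro l k
    simp only [Finset.mem_Icc]
    omega

lemma treeSum_logTracesAt (k : ℕ) :
    logTracesAt.treeSum k =
      ∑ v : Fin k, ∑ T : SimpleGraph (Fin k) with T.IsTree, Real.log (gval T v) := by
  refine Finset.sum_congr rfl fun v _ => ?_
  rw [sum_isTree v]
  refine Finset.sum_congr rfl fun p hp => ?_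
  rw [(mem_rootedTrees.1 hp).gval_parentGraph, logTracesAt_apply, card_tracesAt]

lemma gval_pos {k : ℕ} (T : SimpleGraph (Fin k)) (v : Fin k) : (0 : ℝ) < gval T v := by
  rw [gval]
  positivity

lemma xi4_eq_prod_rpow (K : ℕ) :
    xi4 K = ∏ x ∈ (Finset.Icc 1 K).sigma fun k => (Finset.univ : Finset (Fin k)) ×ˢ
        (Finset.univ : Finset (SimpleGraph (Fin k))).filter SimpleGraph.IsTree,
      (gval x.2.2 x.2.1 : ℝ) ^ fK K x.1 := by
  simp only [Finset.prod_sigma, Finset.prod_product, Finset.prod_filter]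
  exact Finset.prod_congr rfl fun k _ => Finset.prod_comm

lemma succ_div_pos_of_mem_Icc {k : ℕ} (hk : k ∈ Finset.Icc (K + 1) Khat) :
    (0 : ℝ) < ((k : ℝ) + 1) / k := by
  have : 0 < k := K.succ_pos.trans_le (Finset.mem_Icc.1 hk).1
  positivity

lemma two_mul_sub_one_div_pos_of_mem_Icc (hK : 1 ≤ K) {k : ℕ}
    (hk : k ∈ Finset.Icc (K + 1) Khat) : (0 : ℝ) < (2 * (k : ℝ) - 1) / (2 * k - 2) := by
  have hk2 : (2 : ℝ) ≤ k := by
    exact_mod_cast (Nat.add_le_add_right hK 1).trans (Finset.mem_Icc.1 hk).1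
  exact div_pos (by linarith) (by linarith)

lemma xi_pos (hK : 1 ≤ K) (hKhat : K < Khat) :
    0 < xi1 Khat ∧ 0 < xi2 K Khat ∧ 0 < xi3 K Khat ∧ 0 < xi4 K := by
  have : 0 < Khat := K.zero_le.trans_lt hKhat
  refine ⟨Real.rpow_pos_of_pos (by positivity) _,
    Finset.prod_pos fun k hk => Real.rpow_pos_of_pos (succ_div_pos_of_mem_Icc hk) _,
    Finset.prod_pos fun k hk =>
      Real.rpow_pos_of_pos (two_mul_sub_one_div_pos_of_mem_Icc hK hk) _, ?_⟩
  rw [xi4_eq_prod_rpow]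
  exact Finset.prod_pos fun x _ => Real.rpow_pos_of_pos (gval_pos _ _) _

lemma log_xi1 (hKhat : 0 < Khat) :
    Real.log (xi1 Khat) =
      logStep Khat * (1 - ∑ k ∈ Finset.Icc 1 Khat, fringeDensity k * one.treeSum k) := by
  rw [xi1, Real.log_rpow (by positivity), mul_comm, hfun]
  congr 2
  refine Finset.sum_congr rfl fun k hk => ?_
  rw [treeSum_one (Nat.one_le_iff_ne_zero.1 (Finset.mem_Icc.1 hk).1), fringeDensity]
  ring

lemma log_xi2_add_log_xi3 (hK : 1 ≤ K) (Khat : ℕ) :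
    Real.log (xi2 K Khat) + Real.log (xi3 K Khat) =
      ∑ k ∈ Finset.Icc (K + 1) Khat, fringeDensity k * (logStepLowerCount K).treeSum k := by
  rw [xi2, xi3, log_prod_rpow fun k => succ_div_pos_of_mem_Icc,
    log_prod_rpow fun k => two_mul_sub_one_div_pos_of_mem_Icc hK, ← Finset.sum_add_distrib]
  refine Finset.sum_congr rfl fun k hk => ?_
  have hk := (Finset.mem_Icc.1 hk).1
  have hbase : ((2 * (k - 1) : ℕ) : ℝ) = 2 * k - 2 := by
    rw [Nat.cast_mul, Nat.cast_pred (by omega)]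
    push_cast
    ring
  rw [treeSum_logStepLowerCount_of_lt (by omega) (by omega), fringeDensity, logStep, logStep,
    hbase, show (2 * k - 2 + 1 : ℝ) = 2 * k - 1 by ring]
  ring

lemma log_xi4 (K : ℕ) :
    Real.log (xi4 K) =
      ∑ k ∈ Finset.Icc 1 K, fringeDensity k * (logStepLowerCount K).treeSum k := by
  rw [xi4_eq_prod_rpow, log_prod_rpow fun x _ => gval_pos _ _]
  simp only [Finset.sum_sigma, ← Finset.mul_sum, Finset.sum_product, ← treeSum_logTracesAt]
  rw [← sum_fringeDensity_mul_treeSum_sub]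
  refine Finset.sum_congr rfl fun k hk => ?_
  rw [treeSum_logStepLowerCount_of_le (Finset.mem_Icc.1 hk).2]

lemma log_xi (hK : 1 ≤ K) (hKhat : K < Khat) :
    Real.log (xi1 Khat * xi2 K Khat * xi3 K Khat * xi4 K) =
      logStep Khat + ∑ k ∈ Finset.Icc 1 Khat, (fringeDensity k * (logStepLowerCount K).treeSum k -
        logStep Khat * (fringeDensity k * one.treeSum k)) := by
  obtain ⟨h₁, h₂, h₃, h₄⟩ := xi_pos hK hKhat
  have hsplit := Finset.sum_Ioc_consecutive
    (fun k => fringeDensity k * (logStepLowerCount K).treeSum k) K.zero_le hKhat.le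
  simp only [← Finset.Icc_add_one_left_eq_Ioc, zero_add] at hsplit
  rw [Real.log_mul (by positivity) h₄.ne', Real.log_mul (by positivity) h₃.ne',
    Real.log_mul h₁.ne' h₂.ne', log_xi1 (K.zero_le.trans_lt hKhat), log_xi4, add_assoc (_ * _),
    log_xi2_add_log_xi3 hK, Finset.sum_sub_distrib, ← Finset.mul_sum, ← hsplit]
  ring

end Constants

/-! ### The upper bound -/

section UpperBound

open FringeFunctional

variable {K Khat : ℕ}

-- Vertices with more than `Khat` descendants contribute at most `logStep Khat` each.
lemma IsRootedTree.log_card_subtreesAt_root_le {α : Type} [Fintype α] [DecidableEq α]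
    {M : Finset α} {r : α} {p : α → α} (hp : IsRootedTree M r p) (hK : 1 ≤ K)
    (hKhat : 1 ≤ Khat) :
    Real.log (subtreesAt p r).card ≤ logStep Khat * M.card + ∑ k ∈ Finset.Icc 1 Khat,
      ((logStepLowerCount K).fringeSum k M r p - logStep Khat * one.fringeSum k M r p) := by
  have hvertex : ∀ v, logStep (subtreesAt p v).card ≤ logStep Khat +
      ∑ k ∈ Finset.Icc 1 Khat, if (descendants p v).card = k
        then logStepLowerCount K p v - logStep Khat * one p v else 0 := by
    intro v
    have hcard := card_descendants_pos p v
    have hanti : ∀ {m : ℕ}, 0 < m → m ≤ (subtreesAt p v).card →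
        logStep (subtreesAt p v).card ≤ logStep m := fun hm hle =>
      antitoneOn_logStep (Set.mem_Ioi.2 (Nat.cast_pos.2 hm))
        (Set.mem_Ioi.2 (Nat.cast_pos.2 (hm.trans_le hle))) (Nat.cast_le.2 hle)
    rw [Finset.sum_ite_eq, one_apply, mul_one, logStepLowerCount_apply]
    split_ifs with h
    · rw [add_sub_cancel]
      exact hanti (lowerCount_pos hK p v) (hp.lowerCount_le_card_subtreesAt K v)
    · rw [add_zero]
      refine hanti hKhat (le_trans ?_ (hp.card_descendants_le_card_subtreesAt v))
      rw [Finset.mem_Icc] at h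
      omega
  have hcard : ((M.erase r).card : ℝ) ≤ M.card := Nat.cast_le.2 (Finset.card_erase_le)
  rw [hp.log_card_subtreesAt_root]
  refine (Finset.sum_le_sum fun v _ => hvertex v).trans ?_
  rw [Finset.sum_add_distrib, Finset.sum_comm, Finset.sum_const, nsmul_eq_mul, mul_comm]
  gcongr with k
  · exact logStep_nonneg (Nat.cast_nonneg Khat)
  · rw [fringeSum, fringeSum, Finset.mul_sum, ← Finset.sum_sub_distrib, fringeVertices,
      Finset.sum_filter]

lemma almostAllTrees_log_card_subtreesAt_le (hK : 1 ≤ K) (hKhat : K < Khat) {γ : ℝ} (hγ : 0 < γ) :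
    AlmostAllTrees fun n r p => Real.log (subtreesAt p r).card ≤
      (Real.log (xi1 Khat * xi2 K Khat * xi3 K Khat * xi4 K) + γ) * n := by
  have hKhat' : 1 ≤ Khat := hK.trans hKhat.le
  have hC : 0 ≤ logStep Khat := logStep_nonneg (Nat.cast_nonneg Khat)
  set δ := γ / (Khat * (1 + logStep Khat)) with hδ
  have hδ0 : 0 < δ := by positivity
  have hsum : Khat * ((1 + logStep Khat) * δ) = γ := by
    rw [hδ]
    field_simp
  have hconc := almostAllTrees_forall_mem (s := Finset.Icc 1 Khat) fun k _ =>
    ((logStepLowerCount K).almostAllTrees_abs_fringeSum_sub_lt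
      (fun n p v => logStep_natCast_mem_Icc _) k hδ0).and
    (one.almostAllTrees_abs_fringeSum_sub_lt
      (fun n p v => Set.mem_Icc.2 ⟨zero_le_one, le_rfl⟩) k hδ0)
  refine hconc.mono (.of_forall fun n r p hp hdev => ?_)
  have hk : ∀ k ∈ Finset.Icc 1 Khat, (logStepLowerCount K).fringeSum k Finset.univ r p -
      logStep Khat * one.fringeSum k Finset.univ r p ≤
        (fringeDensity k * (logStepLowerCount K).treeSum k -
          logStep Khat * (fringeDensity k * one.treeSum k)) * n + (1 + logStep Khat) * δ * n := by
    intro k hk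
    have hupper := (abs_lt.1 (hdev k hk).1).2
    have hlower := mul_le_mul_of_nonneg_left (abs_lt.1 (hdev k hk).2).1.le hC
    linarith
  refine (hp.log_card_subtreesAt_root_le hK hKhat').trans
    ((add_le_add_right (Finset.sum_le_sum hk) _).trans_eq ?_)
  rw [log_xi hK hKhat, Finset.sum_add_distrib, ← Finset.sum_mul, Finset.sum_const, Nat.card_Icc,
    Nat.add_sub_cancel, nsmul_eq_mul, Finset.card_univ, Fintype.card_fin, ← hsum]
  ring

lemma eventually_log_natCast_le_mul {γ : ℝ} (hγ : 0 < γ) :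
    ∀ᶠ n : ℕ in atTop, Real.log n ≤ γ * n := by
  have hlog := (Real.isLittleO_log_id_atTop.comp_tendsto tendsto_natCast_atTop_atTop).bound hγ
  filter_upwards [hlog] with n hn
  simpa using (le_abs_self _).trans hn

end UpperBound

/-- For fixed `1 ≤ K < K̂` and every `ε > 0`, a.a.s. `c(𝒯_n) ≤ (ξ₁ξ₂ξ₃ξ₄ + ε)^n`. -/
theorem aas_subtree_upper_bound_xi (K Khat : ℕ) (hK : 1 ≤ K) (hKhat : K < Khat) :
    ∀ ε : ℝ, 0 < ε →
      Tendsto (fun n : ℕ =>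
        treeProb n (fun G =>
          (subtreeCount G : ℝ) ≤ (xi1 Khat * xi2 K Khat * xi3 K Khat * xi4 K + ε) ^ n))
        atTop (𝓝 1) := by
  intro ε hε
  obtain ⟨h₁, h₂, h₃, h₄⟩ := xi_pos hK hKhat
  have hbound := fun γ hγ => almostAllTrees_log_card_subtreesAt_le hK hKhat (γ := γ) hγ
  set ξ := xi1 Khat * xi2 K Khat * xi3 K Khat * xi4 K
  have hξ : 0 < ξ := by positivity
  -- One half of the gap absorbs the deviations of the fringe statistics, the other half the
  -- factor `n` for the choice of the top vertex.
  set γ := (Real.log (ξ + ε) - Real.log ξ) / 2 with hγ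
  have hγ0 : 0 < γ := half_pos (sub_pos.2 (Real.log_lt_log hξ (by linarith)))
  refine AlmostAllTrees.tendsto_treeProb ((hbound γ hγ0).mono ?_)
  filter_upwards [eventually_log_natCast_le_mul hγ0, eventually_gt_atTop 0] with n hn hn0 r p hp h
  have hs : (0 : ℝ) < (subtreesAt p r).card := Nat.cast_pos.2 (card_subtreesAt_pos p r)
  have hn0 : (0 : ℝ) < n := Nat.cast_pos.2 hn0
  calc (subtreeCount (parentGraph p) : ℝ) ≤ n * (subtreesAt p r).card := by
        exact_mod_cast hp.subtreeCount_parentGraph_le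
    _ ≤ (ξ + ε) ^ n := by
        rw [← Real.log_le_log_iff (by positivity) (by positivity), Real.log_pow,
          Real.log_mul hn0.ne' hs.ne']
        have hgap : Real.log (ξ + ε) = Real.log ξ + γ + γ := by rw [hγ]; ring
        rw [hgap]
        linarith
end

section
/- Fix an integer k ≥ 2, and let X_k be the number of k-element subsets S ⊆ {1,…,n} such that the subgraph of 𝒯_n induced by S is a star K_{1,k−1} and exactly one edge of 𝒯_n joins S to its complement, with that edge incident to the centre of the star. Then for every ε > 0, the probability that (1−ε)·n·e^{−k}/(k−1)! ≤ X_k ≤ (1+ε)·n·e^{−k}/(k−1)! tends to 1 as n → ∞. -/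
/-!
Deleting a set of leaves, each attached to a prescribed remaining vertex, is a bijection onto the
trees on the remaining vertices. Hence `(n - i) ^ i * T (n - i)` trees on `n ≥ 3` vertices have `i`
given vertices as leaves. Since every such tree has a leaf, inclusion–exclusion turns this into a
recursion for `T`, which the vanishing of `n`-th finite differences of polynomials of degree `n - 2`
shows to be solved by `T n = n ^ (n - 2)`.

A pendant star is a set `L` of leaves at a vertex `c` that becomes a leaf itself once `L` is
deleted. Two rounds of deletion thus give the exact probability of one given pendant star, and of
two given disjoint ones. In a large tree two distinct pendant stars of the same size are disjoint,
so these probabilities determine the first two moments of `X_k / n`, whose limits are `a` and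
`a ^ 2` for `a = e^{-k} / (k - 1)!`. Chebyshev's inequality concludes.
-/

open Filter Topology

/-- `S` is a pendant star of size `k` in `G`: `S` has `k` elements, induces a star
`K_{1,k-1}` in `G` with centre `c`, and exactly one edge of `G` joins `S` to its
complement, with that edge incident to `c`. -/
def IsPendantStar {n : ℕ} (G : SimpleGraph (Fin n)) (k : ℕ) (S : Finset (Fin n)) : Prop :=
  S.card = k ∧ ∃ c ∈ S,
    (∀ x ∈ S, x ≠ c → G.Adj c x) ∧
    (∀ x ∈ S, ∀ y ∈ S, G.Adj x y → x = c ∨ y = c) ∧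
    (∀ a ∈ S, ∀ b : Fin n, b ∉ S → G.Adj a b → a = c) ∧
    (∃! b : Fin n, b ∉ S ∧ G.Adj c b)

namespace PendantStar

open Finset SimpleGraph
open scoped BigOperators

variable {V : Type*} {G : SimpleGraph V}

/-- `x` is a leaf of `G`: it has exactly one neighbour. -/
def IsLeaf (G : SimpleGraph V) (x : V) : Prop := ∃! y, G.Adj x y

/-- Every `x ∈ L` is a leaf of `G`, and its neighbour is the vertex `f x` outside `L`. -/
def HasLeavesAt {L : Set V} (G : SimpleGraph V) (f : L → ↥Lᶜ) : Prop :=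
  ∀ (x : L) (y : V), G.Adj x y ↔ y = f x

section Connectivity

lemma eq_univ_of_adj_closed (hG : G.Connected) {A : Set V} (hne : A.Nonempty)
    (hA : ∀ a ∈ A, ∀ b, G.Adj a b → b ∈ A) : A = Set.univ := by
  obtain ⟨a, ha⟩ := hne
  refine Set.eq_univ_of_forall fun b => ?_
  have hab := (reachable_iff_reflTransGen a b).1 (hG.preconnected a b)
  induction hab with
  | refl => exact ha
  | tail _ hbc ih => exact hA _ ih _ hbc

lemma not_isLeaf_of_adj (hV : 3 ≤ Nat.card V) (hG : G.Connected) {x y : V} (hxy : G.Adj x y)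
    (hx : IsLeaf G x) : ¬ IsLeaf G y := by
  intro hy
  have hpair : ({x, y} : Set V) = Set.univ := by
    refine eq_univ_of_adj_closed hG (Set.insert_nonempty x {y}) ?_
    rintro a (rfl | rfl) b hab
    · exact Or.inr (hx.unique hab hxy)
    · exact Or.inl (hy.unique hab hxy.symm)
  have hcard := Set.ncard_insert_le x {y}
  rw [hpair, Set.ncard_univ, Set.ncard_singleton] at hcard
  omega

/-- A cycle visits no leaf, so it survives the deletion of leaves. -/
lemma isAcyclic_of_induce_compl {L : Set V} (hL : ∀ x ∈ L, IsLeaf G x)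
    (h : (G.induce Lᶜ).IsAcyclic) : G.IsAcyclic := by
  intro v c hc
  have hsupp : ∀ x ∈ c.support, x ∈ Lᶜ := by
    intro x hx hxL
    have htwo := hc.ncard_neighborSet_toSubgraph_eq_two hx
    obtain ⟨y, -, hy⟩ := hL x hxL
    have hsub : c.toSubgraph.neighborSet x ⊆ {y} := fun z hz => hy z (c.toSubgraph.adj_sub hz)
    have hone := Set.ncard_le_ncard hsub
    rw [htwo, Set.ncard_singleton] at hone
    omega
  refine h (c.induce Lᶜ hsupp) ?_
  rwa [← Walk.isCycle_map_iff_of_injective (f := (Embedding.induce Lᶜ).toHom) Subtype.val_injective,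
    Walk.map_induce]

variable {L : Set V} {f : L → ↥Lᶜ}

lemma HasLeavesAt.isLeaf (h : HasLeavesAt G f) {x : V} (hx : x ∈ L) : IsLeaf G x :=
  ⟨f ⟨x, hx⟩, (h ⟨x, hx⟩ _).2 rfl, fun _ hy => (h ⟨x, hx⟩ _).1 hy⟩

lemma HasLeavesAt.connected_of_induce (h : HasLeavesAt G f) (hG : (G.induce Lᶜ).Connected) :
    G.Connected := by
  have hreach : ∀ x, ∃ z : ↥Lᶜ, G.Reachable x z := by
    intro x
    by_cases hx : x ∈ L
    · exact ⟨f ⟨x, hx⟩, ((h ⟨x, hx⟩ _).2 rfl).reachable⟩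
    · exact ⟨⟨x, hx⟩, Reachable.rfl⟩
  have : Nonempty V := hG.nonempty.map Subtype.val
  refine Connected.mk fun x y => ?_
  obtain ⟨x', hx⟩ := hreach x
  obtain ⟨y', hy⟩ := hreach y
  have hx'y' : G.Reachable x' y' := (hG.preconnected x' y').map (Embedding.induce Lᶜ).toHom
  exact (hx.trans hx'y').trans hy.symm

open scoped Classical in
/-- Moving every leaf in `L` to its neighbour collapses the edges at `L` and keeps the others. -/
lemma HasLeavesAt.connected_induce (h : HasLeavesAt G f) (hG : G.Connected) :
    (G.induce Lᶜ).Connected := by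
  let r : V → ↥Lᶜ := fun x => if hx : x ∈ L then f ⟨x, hx⟩ else ⟨x, hx⟩
  have hr : ∀ x : ↥Lᶜ, r x = x := fun x => dif_neg x.2
  have hcollapse : ∀ {x y}, x ∈ L → G.Adj x y → r x = r y := by
    intro x y hx hxy
    obtain rfl := (h ⟨x, hx⟩ y).1 hxy
    rw [hr]
    exact dif_pos hx
  have hadj : ∀ x y, G.Adj x y → (G.induce Lᶜ).Reachable (r x) (r y) := by
    intro x y hxy
    by_cases hx : x ∈ L
    · rw [hcollapse hx hxy]
    by_cases hy : y ∈ L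
    · rw [hcollapse hy hxy.symm]
    · rw [hr ⟨x, hx⟩, hr ⟨y, hy⟩]
      exact Adj.reachable hxy
  have : Nonempty ↥Lᶜ := hG.nonempty.map r
  refine Connected.mk fun x y => ?_
  rw [← hr x, ← hr y]
  simp only [reachable_iff_reflTransGen] at hadj ⊢
  exact Relation.ReflTransGen.lift' r hadj _ _
    ((reachable_iff_reflTransGen _ _).1 (hG.preconnected x.1 y.1))

lemma HasLeavesAt.isTree_induce_iff (h : HasLeavesAt G f) : (G.induce Lᶜ).IsTree ↔ G.IsTree :=
  ⟨fun hT => ⟨h.connected_of_induce hT.connected,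
    isAcyclic_of_induce_compl (fun _ => h.isLeaf) hT.isAcyclic⟩,
  fun hT => ⟨h.connected_induce hT.connected, hT.isAcyclic.induce _⟩⟩

end Connectivity

section Attach

variable {L : Set V}

/-- The graph obtained from `H` by joining every `x ∈ L` to the vertex `f x` outside `L`. -/
def attachLeaves (f : L → ↥Lᶜ) (H : SimpleGraph ↥Lᶜ) : SimpleGraph V :=
  fromRel fun x y => (∃ hx hy, H.Adj ⟨x, hx⟩ ⟨y, hy⟩) ∨ ∃ hx, y = f ⟨x, hx⟩

lemma hasLeavesAt_attachLeaves (f : L → ↥Lᶜ) (H : SimpleGraph ↥Lᶜ) :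
    HasLeavesAt (attachLeaves f H) f := by
  intro x y
  rw [attachLeaves, fromRel_adj]
  grind

lemma induce_attachLeaves (f : L → ↥Lᶜ) (H : SimpleGraph ↥Lᶜ) :
    (attachLeaves f H).induce Lᶜ = H := by
  ext x y
  simp only [comap_adj, Function.Embedding.subtype_apply, attachLeaves, fromRel_adj]
  grind [H.adj_comm x y, H.ne_of_adj]

lemma HasLeavesAt.attachLeaves_induce {f : L → ↥Lᶜ} (h : HasLeavesAt G f) :
    attachLeaves f (G.induce Lᶜ) = G := by
  have hadj : ∀ x (hx : x ∈ L) y, G.Adj x y ↔ y = f ⟨x, hx⟩ := fun x hx y => h ⟨x, hx⟩ y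
  ext x y
  simp only [attachLeaves, fromRel_adj, comap_adj, Function.Embedding.subtype_apply]
  grind [hadj x, hadj y, G.adj_comm x y, G.ne_of_adj]

end Attach

section Counting

/-- The type of trees with vertex set `V`. -/
abbrev TreeOn (V : Type*) : Type _ := {G : SimpleGraph V // G.IsTree}

noncomputable instance [Finite V] : Fintype (TreeOn V) := Fintype.ofFinite _

instance [Finite V] [Nonempty V] : Nonempty (TreeOn V) :=
  let ⟨T, _, hT⟩ := connected_top.exists_isTree_le (G := (⊤ : SimpleGraph V))
  ⟨T, hT⟩

/-- The number of trees with vertex set `V` that satisfy `p`. -/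
noncomputable def treeCount (p : SimpleGraph V → Prop) : ℕ :=
  Nat.card {G : SimpleGraph V // G.IsTree ∧ p G}

/-- The number of labelled trees on `n` vertices. -/
noncomputable def numTrees (n : ℕ) : ℕ := Nat.card (TreeOn (Fin n))

lemma card_treeOn [Finite V] : Nat.card (TreeOn V) = numTrees (Nat.card V) := by
  let e := Finite.equivFin V
  exact Nat.card_congr (e.simpleGraph.subtypeEquiv fun G => (Iso.comap e.symm G).isTree_iff.symm)

lemma treeCount_eq_card_filter (p : SimpleGraph V → Prop) [Fintype (TreeOn V)]
    [DecidablePred fun G : TreeOn V => p G] : treeCount p = #{G : TreeOn V | p G} := by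
  rw [treeCount, ← Fintype.card_subtype, ← Nat.card_eq_fintype_card]
  exact Nat.card_congr (Equiv.subtypeSubtypeEquivSubtypeInter IsTree p).symm

variable {L : Set V}

lemma treeCount_hasLeavesAt (f : L → ↥Lᶜ) (p : SimpleGraph ↥Lᶜ → Prop) :
    treeCount (fun G => HasLeavesAt G f ∧ p (G.induce Lᶜ)) = treeCount p :=
  Nat.card_congr
    { toFun := fun G => ⟨G.1.induce Lᶜ, G.2.2.1.isTree_induce_iff.2 G.2.1, G.2.2.2⟩
      invFun := fun H => ⟨attachLeaves f H.1,
        (hasLeavesAt_attachLeaves f H.1).isTree_induce_iff.1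
          ((induce_attachLeaves f H.1).symm ▸ H.2.1),
        hasLeavesAt_attachLeaves f H.1, (induce_attachLeaves f H.1).symm ▸ H.2.2⟩
      left_inv := fun G => Subtype.ext G.2.2.1.attachLeaves_induce
      right_inv := fun H => Subtype.ext (induce_attachLeaves f H.1) }

lemma HasLeavesAt.unique {f g : L → ↥Lᶜ} (hf : HasLeavesAt G f) (hg : HasLeavesAt G g) : f = g :=
  funext fun x => Subtype.ext ((hg x _).1 ((hf x _).2 rfl))

lemma exists_hasLeavesAt (hV : 3 ≤ Nat.card V) (hG : G.Connected) (hL : ∀ x ∈ L, IsLeaf G x) :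
    ∃ f : L → ↥Lᶜ, HasLeavesAt G f := by
  choose g hadj huniq using fun x : L => hL x x.2
  refine ⟨fun x => ⟨g x, fun hx => ?_⟩, fun x y => ⟨huniq x y, ?_⟩⟩
  · exact not_isLeaf_of_adj hV hG (hadj x) (hL x x.2) (hL _ hx)
  · rintro rfl
    exact hadj x

lemma treeCount_forall_isLeaf [Finite V] (hV : 3 ≤ Nat.card V) (L : Set V) :
    treeCount (fun G => ∀ x ∈ L, IsLeaf G x) = Lᶜ.ncard ^ L.ncard * numTrees Lᶜ.ncard := by
  have hfiber : ∀ f : L → ↥Lᶜ, treeCount (fun G => HasLeavesAt G f) = numTrees Lᶜ.ncard := by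
    intro f
    simpa only [treeCount, and_true, card_treeOn, Nat.card_coe_set_eq]
      using treeCount_hasLeavesAt f fun _ => True
  let forget : (Σ f : L → ↥Lᶜ, {G : SimpleGraph V // G.IsTree ∧ HasLeavesAt G f}) →
      {G : SimpleGraph V // G.IsTree ∧ ∀ x ∈ L, IsLeaf G x} :=
    fun G => ⟨G.2.1, G.2.2.1, fun _ => G.2.2.2.isLeaf⟩
  have hbij : forget.Bijective := by
    refine ⟨?_, fun G => ?_⟩
    · rintro ⟨f, G, hG⟩ ⟨f', G', hG'⟩ h
      obtain rfl : G = G' := congrArg Subtype.val h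
      exact Sigma.subtype_ext (hG.2.unique hG'.2) rfl
    · obtain ⟨f, hf⟩ := exists_hasLeavesAt hV G.2.1.connected G.2.2
      exact ⟨⟨f, G.1, G.2.1, hf⟩, rfl⟩
  have : Fintype (L → ↥Lᶜ) := Fintype.ofFinite _
  calc treeCount (fun G => ∀ x ∈ L, IsLeaf G x)
      = ∑ f : L → ↥Lᶜ, treeCount (fun G => HasLeavesAt G f) := by
        rw [treeCount, ← Nat.card_eq_of_bijective forget hbij, Nat.card_sigma]
        rfl
    _ = Lᶜ.ncard ^ L.ncard * numTrees Lᶜ.ncard := by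
        rw [sum_congr rfl fun f _ => hfiber f, sum_const, card_univ, ← Nat.card_eq_fintype_card,
          Nat.card_fun, smul_eq_mul, Nat.card_coe_set_eq, Nat.card_coe_set_eq]

/-- Two rounds of deletion: first `L`, and then the vertices of `C`, which have become leaves. -/
lemma treeCount_hasLeavesAt_isLeaf [Finite V] (hL : 3 ≤ Lᶜ.ncard) (f : L → ↥Lᶜ) (C : Set ↥Lᶜ) :
    treeCount (fun G => HasLeavesAt G f ∧ ∀ x ∈ C, IsLeaf (G.induce Lᶜ) x) =
      Cᶜ.ncard ^ C.ncard * numTrees Cᶜ.ncard := by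
  rw [treeCount_hasLeavesAt f fun H => ∀ x ∈ C, IsLeaf H x, treeCount_forall_isLeaf hL]

end Counting

section Cayley

lemma exists_isLeaf [Finite V] [Nontrivial V] (hG : G.IsTree) : ∃ x, IsLeaf G x := by
  classical
  have := Fintype.ofFinite V
  obtain ⟨x, hx⟩ := hG.exists_vert_degree_one_of_nontrivial
  exact ⟨x, degree_eq_one_iff_existsUnique_adj.1 hx⟩

lemma numTrees_zero : numTrees 0 = 0 := by
  have : IsEmpty {G : SimpleGraph (Fin 0) // G.IsTree} :=
    ⟨fun G => isEmptyElim G.2.connected.nonempty.some⟩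
  exact Nat.card_of_isEmpty

lemma numTrees_of_le_two {n : ℕ} (hn : 0 < n) (hn2 : n ≤ 2) : numTrees n = 1 := by
  have : NeZero n := ⟨hn.ne'⟩
  have hacyclic : ∀ G : SimpleGraph (Fin n), G.IsAcyclic := fun G =>
    IsAcyclic.of_card_le_two (by simpa using hn2)
  have htree : ∀ G : SimpleGraph (Fin n), G.IsTree ↔ G = ⊤ := by
    intro G
    rw [isTree_iff_maximal_isAcyclic]
    exact ⟨fun h => top_le_iff.1 (h.2.2 (hacyclic ⊤) le_top), fun h => by
      subst h; exact ⟨inferInstance, hacyclic ⊤, fun _ _ _ => le_top⟩⟩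
  simp only [numTrees, TreeOn, htree, Nat.card_unique]

/-- Inclusion–exclusion over the leaves: no tree on `n` vertices is leafless. -/
lemma sum_neg_one_pow_mul_numTrees_eq_zero {n : ℕ} (hn : 3 ≤ n) :
    ∑ i ∈ range (n + 1), (-1 : ℤ) ^ i * n.choose i *
      ((n - i) ^ i * numTrees (n - i) : ℕ) = 0 := by
  classical
  have : Nontrivial (Fin n) := Fin.nontrivial_iff_two_le.2 (by omega)
  let leafy : Fin n → Finset (TreeOn (Fin n)) := fun x => {G | IsLeaf G.1 x}
  have hcard : ∀ L : Finset (Fin n), #(L.inf leafy) = (n - #L) ^ #L * numTrees (n - #L) := by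
    intro L
    have hcompl : ((L : Set (Fin n))ᶜ).ncard = n - #L := by
      rw [Set.ncard_compl, Nat.card_fin, Set.ncard_coe_finset]
    have hinf : L.inf leafy =
        ({G | ∀ x ∈ (L : Set (Fin n)), IsLeaf G.1 x} : Finset (TreeOn (Fin n))) := by
      ext G
      simp only [leafy, mem_inf, mem_filter_univ, mem_coe]
    rw [hinf, ← treeCount_eq_card_filter fun G => ∀ x ∈ (L : Set (Fin n)), IsLeaf G x,
      treeCount_forall_isLeaf (by simpa using hn), hcompl, Set.ncard_coe_finset]
  have hleafless : univ.inf (fun x => (leafy x)ᶜ) = ∅ := by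
    refine eq_empty_of_forall_notMem fun G hG => ?_
    obtain ⟨x, hx⟩ := exists_isLeaf G.2
    exact mem_compl.1 (mem_inf.1 hG x (mem_univ x)) (mem_filter_univ G |>.2 hx)
  have hie := inclusion_exclusion_card_inf_compl univ leafy
  rw [hleafless, card_empty, Nat.cast_zero] at hie
  rw [hie]
  simp only [hcard]
  rw [sum_powerset_apply_card fun i => (-1 : ℤ) ^ i * ((n - i) ^ i * numTrees (n - i) : ℕ)]
  simp only [card_univ, Fintype.card_fin, nsmul_eq_mul]
  exact sum_congr rfl fun i _ => by ring

/-- An `n`-th finite difference annihilates polynomials of degree less than `n`. -/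
lemma sum_neg_one_pow_mul_choose_mul_sub_pow_eq_zero {n d : ℕ} (hd : d < n) :
    ∑ i ∈ range (n + 1), (-1 : ℤ) ^ i * n.choose i * ((n - i) ^ d : ℕ) = 0 := by
  have h := congrFun (fwdDiff_iter_pow_eq_zero_of_lt (R := ℤ) hd) 0
  rw [fwdDiff_iter_eq_sum_shift, ← sum_range_reflect, Pi.zero_apply] at h
  rw [← h]
  refine sum_congr rfl fun i hi => ?_
  have hin : i ≤ n := mem_range_succ_iff.1 hi
  have hsub : n - (n - i) = i := by omega
  simp [hsub, Nat.choose_symm hin]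

theorem numTrees_eq {n : ℕ} (hn : 0 < n) : numTrees n = n ^ (n - 2) := by
  induction n using Nat.strong_induction_on with
  | _ n ih =>
  by_cases hn2 : n ≤ 2
  · rw [numTrees_of_le_two hn hn2, Nat.sub_eq_zero_of_le hn2, pow_zero]
  have hterm : ∀ i < n, (n - (i + 1)) ^ (i + 1) * numTrees (n - (i + 1)) =
      (n - (i + 1)) ^ (n - 2) := by
    intro i hi
    obtain h | h | h : n - (i + 1) = 0 ∨ n - (i + 1) = 1 ∨ 2 ≤ n - (i + 1) := by omega
    · rw [h, numTrees_zero, mul_zero, zero_pow (by omega)]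
    · rw [h, numTrees_of_le_two one_pos one_le_two, one_pow, one_pow, one_mul]
    · rw [ih _ (by omega) (by omega), ← pow_add]
      congr 1
      omega
  have htrees := sum_neg_one_pow_mul_numTrees_eq_zero (n := n) (by omega)
  have hpowers := sum_neg_one_pow_mul_choose_mul_sub_pow_eq_zero (n := n) (d := n - 2) (by omega)
  rw [sum_range_succ'] at htrees hpowers
  rw [sum_congr rfl fun i hi => by rw [hterm i (mem_range.1 hi)]] at htrees
  exact_mod_cast (by simpa using add_left_cancel (htrees.trans hpowers.symm) :
    (numTrees n : ℤ) = n ^ (n - 2))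

end Cayley

section Stars

/-- The vertices of `L` are leaves of `G` attached to `c`, and `c` has exactly one neighbour outside
`L`. Then `insert c L` is a pendant star with centre `c`. -/
def IsStarAt (G : SimpleGraph V) (c : V) (L : Finset V) : Prop :=
  (∀ x ∈ L, ∀ y, G.Adj x y ↔ y = c) ∧ ∃! b, b ∉ L ∧ G.Adj c b

lemma isLeaf_induce_iff {s : Set V} {c : V} (hc : c ∈ s) :
    IsLeaf (G.induce s) ⟨c, hc⟩ ↔ ∃! b, b ∈ s ∧ G.Adj c b := by
  simp only [IsLeaf, ExistsUnique, Subtype.exists, Subtype.forall, comap_adj,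
    Function.Embedding.subtype_apply, Subtype.mk.injEq]
  grind

variable {c c' : V} {L L' : Finset V}

lemma IsStarAt.notMem (h : IsStarAt G c L) : c ∉ L :=
  fun hc => G.irrefl ((h.1 c hc c).2 rfl)

/-- After the deletion of `L`, the centre `c` has become a leaf. -/
lemma treeCount_isStarAt [Finite V] (hc : c ∉ L) (hV : #L + 3 ≤ Nat.card V) :
    treeCount (fun G => IsStarAt G c L) =
      (Nat.card V - (#L + 1)) * numTrees (Nat.card V - (#L + 1)) := by
  have hcompl : ((L : Set V)ᶜ).ncard = Nat.card V - #L := by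
    rw [Set.ncard_compl, Set.ncard_coe_finset]
  let centre : ↥(L : Set V)ᶜ := ⟨c, hc⟩
  have hcount := treeCount_hasLeavesAt_isLeaf (by omega) (fun _ => centre) {centre}
  rw [Set.ncard_singleton, Set.ncard_compl, Set.ncard_singleton, Nat.card_coe_set_eq, hcompl,
    pow_one, Nat.sub_sub] at hcount
  rw [← hcount]
  congr! 2 with G
  simp only [IsStarAt, HasLeavesAt, Set.mem_singleton_iff, forall_eq, centre, isLeaf_induce_iff,
    Subtype.forall, mem_coe, Set.mem_compl_iff]

lemma isStarAt_and_isStarAt_iff [DecidableEq V] (hcc' : c ≠ c') (hLL' : Disjoint L L') :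
    IsStarAt G c L ∧ IsStarAt G c' L' ↔
      (∀ x ∈ L ∪ L', ∀ y, G.Adj x y ↔ y = if x ∈ L then c else c') ∧
        (∃! b, b ∉ L ∪ L' ∧ G.Adj c b) ∧ ∃! b, b ∉ L ∪ L' ∧ G.Adj c' b := by
  have hleaves : (∀ x ∈ L ∪ L', ∀ y, G.Adj x y ↔ y = if x ∈ L then c else c') ↔
      (∀ x ∈ L, ∀ y, G.Adj x y ↔ y = c) ∧ ∀ x ∈ L', ∀ y, G.Adj x y ↔ y = c' := by
    grind [Finset.disjoint_left]
  rw [hleaves, IsStarAt, IsStarAt, and_and_and_comm]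
  refine and_congr_right fun ⟨hL, hL'⟩ => and_congr ?_ ?_
  · have hnot : ∀ b ∈ L', ¬ G.Adj c b := fun b hb hcb => hcc' ((hL' b hb c).1 hcb.symm)
    refine existsUnique_congr fun b => ?_
    grind
  · have hnot : ∀ b ∈ L, ¬ G.Adj c' b := fun b hb hcb => hcc' ((hL b hb c').1 hcb.symm).symm
    refine existsUnique_congr fun b => ?_
    grind

lemma treeCount_isStarAt_and_isStarAt [Finite V] [DecidableEq V]
    (hdisj : Disjoint (insert c L) (insert c' L')) (hV : #L + #L' + 3 ≤ Nat.card V)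
    (hcL : c ∉ L) (hc'L' : c' ∉ L') :
    treeCount (fun G => IsStarAt G c L ∧ IsStarAt G c' L') =
      (Nat.card V - (#L + #L' + 2)) ^ 2 * numTrees (Nat.card V - (#L + #L' + 2)) := by
  obtain ⟨⟨hcc', hc'L⟩, hcL', hLL'⟩ : (c ≠ c' ∧ c' ∉ L) ∧ c ∉ L' ∧ Disjoint L L' := by
    simp_all [eq_comm]
  have hcompl : ((L ∪ L' : Finset V) : Set V)ᶜ.ncard = Nat.card V - (#L + #L') := by
    rw [Set.ncard_compl, Set.ncard_coe_finset, card_union_of_disjoint hLL']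
  let centre : ↥((L ∪ L' : Finset V) : Set V)ᶜ := ⟨c, by simp [hcL, hcL']⟩
  let centre' : ↥((L ∪ L' : Finset V) : Set V)ᶜ := ⟨c', by simp [hc'L, hc'L']⟩
  have hpair : ({centre, centre'} : Set _).ncard = 2 :=
    Set.ncard_pair fun h => hcc' (congrArg Subtype.val h)
  have hcount := treeCount_hasLeavesAt_isLeaf (by omega)
    (fun x => if x.1 ∈ L then centre else centre') {centre, centre'}
  rw [hpair, Set.ncard_compl, hpair, Nat.card_coe_set_eq, hcompl, Nat.sub_sub] at hcount
  rw [← hcount]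
  congr! 2 with G
  rw [isStarAt_and_isStarAt_iff hcc' hLL']
  simp only [HasLeavesAt, Set.mem_insert_iff, Set.mem_singleton_iff, forall_eq_or_imp, forall_eq,
    centre, centre', isLeaf_induce_iff, Subtype.forall, mem_coe, Set.mem_compl_iff,
    apply_ite Subtype.val]

lemma IsStarAt.centre_notMem_of_card_eq (h : IsStarAt G c L) (h' : IsStarAt G c' L')
    (hLL' : #L = #L') : c ∉ L' := by
  intro hc
  obtain ⟨b, ⟨hbL, hcb⟩, -⟩ := h.2
  obtain ⟨x, hx⟩ : L.Nonempty := card_pos.1 (hLL' ▸ card_pos.2 ⟨c, hc⟩)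
  have hb : b = c' := (h'.1 c hc b).1 hcb
  have hx' : x = c' := (h'.1 c hc x).1 ((h.1 x hx c).2 rfl).symm
  exact hbL (hb.trans hx'.symm ▸ hx)

lemma IsStarAt.eq_or_disjoint [Finite V] [DecidableEq V] (hG : G.Connected)
    (hV : #L + 3 ≤ Nat.card V) (hLL' : #L = #L') (h : IsStarAt G c L) (h' : IsStarAt G c' L') :
    (c = c' ∧ L = L') ∨ Disjoint (insert c L) (insert c' L') := by
  by_cases hcc' : c = c'
  · subst hcc'
    refine Or.inl ⟨rfl, (eq_of_subset_of_card_le (fun y hy => ?_) hLL'.le).symm⟩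
    by_contra hyL
    have hclosed : ((insert c (insert y L) : Finset V) : Set V) = Set.univ := by
      refine eq_univ_of_adj_closed hG ⟨c, by simp⟩ ?_
      have houter : ∀ b ∉ L, G.Adj c b → b = y := fun b hb hcb =>
        h.2.unique ⟨hb, hcb⟩ ⟨hyL, ((h'.1 y hy c).2 rfl).symm⟩
      grind [IsStarAt, G.adj_comm]
    have hcard : #(insert c (insert y L)) = Nat.card V := by
      rw [← Set.ncard_coe_finset, hclosed, Set.ncard_univ]
    grind
  · have hleaves : Disjoint L L' := Finset.disjoint_left.2 fun x hx hx' =>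
      hcc' ((h'.1 x hx' c).1 ((h.1 x hx c).2 rfl))
    have hcL' := h.centre_notMem_of_card_eq h' hLL'
    have hc'L := h'.centre_notMem_of_card_eq h hLL'.symm
    right
    simp only [disjoint_insert_left, disjoint_insert_right, mem_insert, not_or]
    exact ⟨⟨Ne.symm hcc', hc'L⟩, hcL', hleaves⟩

lemma IsStarAt.eq_of_insert_eq [DecidableEq V] (h : IsStarAt G c L) (h' : IsStarAt G c' L')
    (heq : insert c L = insert c' L') : c = c' ∧ L = L' := by
  obtain ⟨b, ⟨hbL, hcb⟩, -⟩ := h.2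
  have hb : b ∉ insert c' L' := heq ▸ by simp [hbL, hcb.ne']
  have hcL' : c ∉ L' := fun hc => hb ((h'.1 c hc b).1 hcb ▸ mem_insert_self c' L')
  obtain rfl : c = c' := (mem_insert.1 (heq ▸ mem_insert_self c L)).resolve_right hcL'
  exact ⟨rfl, by rw [← erase_insert h.notMem, ← erase_insert h'.notMem, heq]⟩

lemma isPendantStar_succ_iff {n j : ℕ} {G : SimpleGraph (Fin n)} {S : Finset (Fin n)} :
    IsPendantStar G (j + 1) S ↔ ∃ c L, #L = j ∧ IsStarAt G c L ∧ insert c L = S := by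
  constructor
  · rintro ⟨hS, c, hc, hadj, hstar, hout, hb⟩
    refine ⟨c, S.erase c, by rw [card_erase_of_mem hc, hS]; rfl, ⟨?_, ?_⟩, insert_erase hc⟩
    · grind [G.adj_comm]
    · refine (existsUnique_congr fun b => ?_).2 hb
      grind [G.irrefl]
  · rintro ⟨c, L, hL, h, rfl⟩
    refine ⟨by rw [card_insert_of_notMem h.notMem, hL], c, mem_insert_self c L, ?_, ?_, ?_, ?_⟩
    · grind [IsStarAt, G.adj_comm]
    · grind [IsStarAt, G.adj_comm]
    · grind [IsStarAt, G.adj_comm]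
    · refine (existsUnique_congr fun b => ?_).2 h.2
      grind [G.irrefl]

/-- The candidate pairs (centre, set of `j` leaves) for pendant stars on `n` vertices. -/
def stars (n j : ℕ) : Finset (Σ _ : Fin n, Finset (Fin n)) :=
  univ.sigma fun c => powersetCard j (univ.erase c)

lemma mem_stars {n j : ℕ} {s : Σ _ : Fin n, Finset (Fin n)} :
    s ∈ stars n j ↔ s.1 ∉ s.2 ∧ #s.2 = j := by
  simp [stars, mem_powersetCard, subset_erase]

lemma card_stars (n j : ℕ) : #(stars n j) = n * (n - 1).choose j := by
  simp [stars, card_sigma, card_powersetCard]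

open scoped Classical in
lemma card_isPendantStar_succ {n : ℕ} (j : ℕ) (G : SimpleGraph (Fin n)) :
    Nat.card {S : Finset (Fin n) // IsPendantStar G (j + 1) S} =
      #{s ∈ stars n j | IsStarAt G s.1 s.2} := by
  rw [Nat.card_eq_fintype_card, Fintype.card_subtype]
  symm
  refine card_bij (fun s _ => insert s.1 s.2) ?_ ?_ ?_
  · intro s hs
    obtain ⟨hmem, hstar⟩ := mem_filter.1 hs
    exact (mem_filter_univ _).2 (isPendantStar_succ_iff.2 ⟨_, _, (mem_stars.1 hmem).2, hstar, rfl⟩)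
  · rintro ⟨c, L⟩ hs ⟨c', L'⟩ hs' heq
    obtain ⟨rfl, rfl⟩ := (mem_filter.1 hs).2.eq_of_insert_eq (mem_filter.1 hs').2 heq
    rfl
  · intro S hS
    obtain ⟨c, L, hL, hstar, rfl⟩ := isPendantStar_succ_iff.1 ((mem_filter_univ _).1 hS)
    exact ⟨⟨c, L⟩, mem_filter.2 ⟨mem_stars.2 ⟨hstar.notMem, hL⟩, hstar⟩, rfl⟩

end Stars

section SecondMoment

variable {Ω : Type*} [Fintype Ω]

open scoped Classical in
/-- The probability that a uniformly random element of `Ω` satisfies `p`; it is `0` if `Ω` is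
empty. -/
noncomputable def prob (p : Ω → Prop) : ℝ := 𝔼 ω, if p ω then 1 else 0

lemma prob_le_one (p : Ω → Prop) : prob p ≤ 1 := by
  cases isEmpty_or_nonempty Ω
  · simp [prob]
  · exact expect_le univ_nonempty fun ω _ => by split_ifs <;> norm_num

lemma expect_card_filter {ι : Type*} (S : Finset ι) (r : Ω → ι → Prop)
    [∀ ω, DecidablePred (r ω)] :
    𝔼 ω, (#{s ∈ S | r ω s} : ℝ) = ∑ s ∈ S, prob fun ω => r ω s := by
  simp only [card_filter, Nat.cast_sum, Nat.cast_ite, Nat.cast_one, Nat.cast_zero, expect_sum_comm,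
    prob]
  congr!

/-- The diagonal of the double sum over `S` contributes the expectation itself. -/
lemma expect_card_filter_sq_le {ι : Type*} (S : Finset ι) (r : Ω → ι → Prop)
    [∀ ω, DecidablePred (r ω)] {B : ℝ} (hB : 0 ≤ B)
    (hpair : ∀ s ∈ S, ∀ t ∈ S, s ≠ t → prob (fun ω => r ω s ∧ r ω t) ≤ B) :
    𝔼 ω, (#{s ∈ S | r ω s} : ℝ) ^ 2 ≤ 𝔼 ω, (#{s ∈ S | r ω s} : ℝ) + #S ^ 2 * B := by
  classical
  have hsq : ∀ ω, (#{s ∈ S | r ω s} : ℝ) ^ 2 = #{st ∈ S ×ˢ S | r ω st.1 ∧ r ω st.2} := by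
    intro ω
    rw [filter_product, card_product, Nat.cast_mul, sq]
  have hterm : ∀ s ∈ S, ∀ t ∈ S, prob (fun ω => r ω s ∧ r ω t) ≤
      (if s = t then prob fun ω => r ω s else 0) + B := by
    intro s hs t ht
    split_ifs with hst
    · simp only [← hst, and_self]
      exact le_add_of_nonneg_right hB
    · rw [zero_add]
      exact hpair s hs t ht hst
  calc 𝔼 ω, (#{s ∈ S | r ω s} : ℝ) ^ 2
      = ∑ s ∈ S, ∑ t ∈ S, prob fun ω => r ω s ∧ r ω t := by
        simp_rw [hsq, expect_card_filter (S ×ˢ S) fun ω st => r ω st.1 ∧ r ω st.2, sum_product]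
    _ ≤ ∑ s ∈ S, ∑ t ∈ S, ((if s = t then prob fun ω => r ω s else 0) + B) :=
        sum_le_sum fun s hs => sum_le_sum fun t ht => hterm s hs t ht
    _ = 𝔼 ω, (#{s ∈ S | r ω s} : ℝ) + #S ^ 2 * B := by
        rw [expect_card_filter]
        simp only [sum_add_distrib, sum_ite_eq, sum_ite_mem, inter_self, sum_const, nsmul_eq_mul,
          sq, mul_assoc]

lemma expect_sub_sq [Nonempty Ω] (X : Ω → ℝ) (a : ℝ) :
    𝔼 ω, (X ω - a) ^ 2 = 𝔼 ω, X ω ^ 2 - 2 * a * 𝔼 ω, X ω + a ^ 2 := by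
  rw [mul_expect, ← expect_sub_distrib, ← Fintype.expect_const (ι := Ω) (a ^ 2),
    ← expect_add_distrib]
  exact expect_congr rfl fun ω _ => by ring

lemma one_sub_le_prob_abs_sub_le [Nonempty Ω] (X : Ω → ℝ) (a : ℝ) {δ : ℝ} (hδ : 0 < δ) :
    1 - (𝔼 ω, (X ω - a) ^ 2) / δ ^ 2 ≤ prob fun ω => |X ω - a| ≤ δ := by
  rw [expect_div, ← Fintype.expect_const (ι := Ω) (1 : ℝ), ← expect_sub_distrib]
  refine expect_le_expect fun ω _ => ?_
  split_ifs with hω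
  · exact sub_le_self 1 (by positivity)
  · rw [sub_nonpos, one_le_div (by positivity), sq_le_sq, abs_of_pos hδ]
    exact (not_le.1 hω).le

lemma tendsto_prob_abs_sub_le {Ω : ℕ → Type*} [∀ n, Fintype (Ω n)]
    (hΩ : ∀ᶠ n in atTop, Nonempty (Ω n)) {X : ∀ n, Ω n → ℝ} {Q : ℕ → ℝ} {a δ : ℝ}
    (hmean : Tendsto (fun n => 𝔼 ω, X n ω) atTop (𝓝 a))
    (hsq : ∀ᶠ n in atTop, 𝔼 ω, X n ω ^ 2 ≤ Q n) (hQ : Tendsto Q atTop (𝓝 (a ^ 2))) (hδ : 0 < δ) :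
    Tendsto (fun n => prob fun ω => |X n ω - a| ≤ δ) atTop (𝓝 1) := by
  have hlower : Tendsto (fun n => 1 - (Q n - 2 * a * 𝔼 ω, X n ω + a ^ 2) / δ ^ 2) atTop (𝓝 1) := by
    have h := (((hQ.sub (hmean.const_mul (2 * a))).add_const (a ^ 2)).div_const (δ ^ 2)).const_sub 1
    convert h using 2
    ring
  refine tendsto_of_tendsto_of_tendsto_of_le_of_le' hlower tendsto_const_nhds ?_
    (Eventually.of_forall fun n => prob_le_one _)
  filter_upwards [hΩ, hsq] with n _ hn
  refine le_trans ?_ (one_sub_le_prob_abs_sub_le (X n) a hδ)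
  rw [expect_sub_sq]
  gcongr

end SecondMoment

section Moments

lemma treeProb_eq_prob (n : ℕ) (p : SimpleGraph (Fin n) → Prop) :
    treeProb n p = prob fun G : TreeOn (Fin n) => p G := by
  classical
  rw [prob, expect_eq_sum_div_card, sum_boole, ← treeCount_eq_card_filter, card_univ,
    ← Nat.card_eq_fintype_card]
  rfl

/-- The probability that `r` prescribed disjoint stars with `j` leaves each are pendant stars of a
uniformly random tree on `n` vertices. -/
noncomputable def starProb (n j r : ℕ) : ℝ :=
  ((n - r * (j + 1)) ^ r * numTrees (n - r * (j + 1)) : ℕ) / numTrees n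

variable {n j : ℕ}

lemma prob_isStarAt (hn : j + 3 ≤ n) {s : Σ _ : Fin n, Finset (Fin n)} (hs : s ∈ stars n j) :
    prob (fun G : TreeOn (Fin n) => IsStarAt G.1 s.1 s.2) = starProb n j 1 := by
  obtain ⟨hc, hL⟩ := mem_stars.1 hs
  have hcount := treeCount_isStarAt hc (by rwa [Nat.card_fin, hL])
  rw [hL, Nat.card_fin] at hcount
  rw [← treeProb_eq_prob n fun G => IsStarAt G s.1 s.2, starProb, one_mul, pow_one, ← hcount]
  rfl

lemma prob_isStarAt_and_isStarAt_le (hn : 2 * j + 3 ≤ n) {s t : Σ _ : Fin n, Finset (Fin n)}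
    (hs : s ∈ stars n j) (ht : t ∈ stars n j) (hst : s ≠ t) :
    prob (fun G : TreeOn (Fin n) => IsStarAt G.1 s.1 s.2 ∧ IsStarAt G.1 t.1 t.2) ≤
      starProb n j 2 := by
  obtain ⟨c, L⟩ := s
  obtain ⟨c', L'⟩ := t
  obtain ⟨hc, hL⟩ := mem_stars.1 hs
  obtain ⟨hc', hL'⟩ := mem_stars.1 ht
  dsimp only at hc hL hc' hL' ⊢
  by_cases hdisj : Disjoint (insert c L) (insert c' L')
  · have hcount := treeCount_isStarAt_and_isStarAt hdisj (by rw [Nat.card_fin]; omega) hc hc'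
    rw [hL, hL', Nat.card_fin, show j + j + 2 = 2 * (j + 1) by ring] at hcount
    rw [← treeProb_eq_prob n fun G => IsStarAt G c L ∧ IsStarAt G c' L', starProb, ← hcount]
    rfl
  · have hnever : ∀ G : TreeOn (Fin n), ¬ (IsStarAt G.1 c L ∧ IsStarAt G.1 c' L') := by
      rintro G ⟨h, h'⟩
      obtain ⟨rfl, rfl⟩ := (h.eq_or_disjoint G.2.connected (by rw [Nat.card_fin]; omega)
        (hL.trans hL'.symm) h').resolve_right hdisj
      exact hst rfl
    simp only [prob, hnever, if_false, expect_const_zero]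
    rw [starProb]
    positivity

/-- The number of pendant stars with `j` leaves, divided by the number of vertices. -/
noncomputable def starDensity (j : ℕ) (G : SimpleGraph (Fin n)) : ℝ :=
  Nat.card {S : Finset (Fin n) // IsPendantStar G (j + 1) S} / n

lemma expect_starDensity (hn : j + 3 ≤ n) :
    𝔼 G : TreeOn (Fin n), starDensity j G.1 = #(stars n j) / n * starProb n j 1 := by
  classical
  simp only [starDensity, card_isPendantStar_succ]
  rw [← expect_div, expect_card_filter, sum_congr rfl fun s hs => prob_isStarAt hn hs, sum_const,
    nsmul_eq_mul, mul_div_right_comm]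

lemma expect_starDensity_sq_le (hn : 2 * j + 3 ≤ n) :
    𝔼 G : TreeOn (Fin n), starDensity j G.1 ^ 2 ≤
      (𝔼 G : TreeOn (Fin n), starDensity j G.1) * (1 / n) +
        (#(stars n j) / n) ^ 2 * starProb n j 2 := by
  classical
  have hsq := expect_card_filter_sq_le (stars n j)
    (fun (G : TreeOn (Fin n)) s => IsStarAt G.1 s.1 s.2) (B := starProb n j 2)
    (by rw [starProb]; positivity) fun s hs t ht => prob_isStarAt_and_isStarAt_le hn hs ht
  simp only [starDensity, card_isPendantStar_succ, div_pow]
  rw [← expect_div, ← expect_div]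
  refine (div_le_div_of_nonneg_right hsq (sq_nonneg (n : ℝ))).trans_eq ?_
  ring

end Moments

section Asymptotics

lemma tendsto_sub_div_pow (t m : ℕ) :
    Tendsto (fun n : ℕ => (((n - t : ℕ) : ℝ) / n) ^ (n - m)) atTop (𝓝 (Real.exp (-t))) := by
  have hdrop : Tendsto (fun n : ℕ => (1 + -(t : ℝ) / n) ^ m) atTop (𝓝 1) := by
    simpa using ((tendsto_const_div_atTop_nhds_zero_nat (-(t : ℝ))).const_add 1).pow m
  have hquot := (Real.tendsto_one_add_div_pow_exp (-(t : ℝ))).div hdrop one_ne_zero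
  rw [div_one] at hquot
  refine hquot.congr' ?_
  filter_upwards [eventually_gt_atTop t, eventually_ge_atTop m] with n hn hm
  have hn0 : (n : ℝ) ≠ 0 := by exact_mod_cast (Nat.zero_le t).trans_lt hn |>.ne'
  have hbase : ((n - t : ℕ) : ℝ) / n = 1 + -(t : ℝ) / n := by
    rw [Nat.cast_sub hn.le, sub_div, div_self hn0, neg_div, sub_eq_add_neg]
  have hbase0 : 1 + -(t : ℝ) / n ≠ 0 := by
    rw [← hbase]
    exact div_ne_zero (Nat.cast_ne_zero.2 (Nat.sub_ne_zero_of_lt hn)) hn0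
  rw [hbase, Pi.div_apply, pow_sub₀ _ hbase0 hm, div_eq_mul_inv]

lemma tendsto_card_stars_div_pow (j : ℕ) :
    Tendsto (fun n : ℕ => (#(stars n j) : ℝ) / n ^ (j + 1)) atTop (𝓝 (1 / j.factorial)) := by
  have hchoose : Tendsto (fun n : ℕ => (n.choose (j + 1) : ℝ) / (n ^ (j + 1) / (j + 1).factorial))
      atTop (𝓝 1) := by
    refine (Asymptotics.isEquivalent_iff_tendsto_one ?_).1 (isEquivalent_choose (j + 1))
    filter_upwards [eventually_gt_atTop 0] with n hn
    positivity
  refine (hchoose.div_const (j.factorial : ℝ)).congr' ?_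
  filter_upwards [eventually_gt_atTop 0] with n hn
  obtain ⟨m, rfl⟩ := Nat.exists_eq_add_of_lt hn
  rw [card_stars, zero_add, Nat.add_sub_cancel, Nat.add_one_mul_choose_eq, Nat.factorial_succ]
  push_cast
  field_simp

/-- By Cayley's formula the left-hand side is `((n - t) / n) ^ (n - (r * j + 2))`, where
`t = r * (j + 1)`. -/
lemma tendsto_pow_mul_starProb (j r : ℕ) :
    Tendsto (fun n : ℕ => (n : ℝ) ^ (r * j) * starProb n j r) atTop
      (𝓝 (Real.exp (-(r * (j + 1) : ℕ)))) := by
  refine (tendsto_sub_div_pow (r * (j + 1)) (r * j + 2)).congr' ?_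
  filter_upwards [eventually_ge_atTop (r * (j + 1) + 2)] with n hn
  have hn0 : (n : ℝ) ≠ 0 := by exact_mod_cast (by omega : n ≠ 0)
  have hnum : r + (n - r * (j + 1) - 2) = n - (r * j + 2) := by
    rw [Nat.mul_succ] at hn ⊢
    omega
  have hden : n - 2 = r * j + (n - (r * j + 2)) := by
    rw [Nat.mul_succ] at hn
    omega
  rw [starProb, numTrees_eq (by omega), numTrees_eq (by omega), ← pow_add, hnum, hden, div_pow]
  push_cast
  rw [pow_add]
  field_simp

lemma tendsto_card_stars_pow_mul_starProb (j r : ℕ) :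
    Tendsto (fun n : ℕ => (#(stars n j) / n : ℝ) ^ r * starProb n j r) atTop
      (𝓝 ((Real.exp (-(j + 1 : ℕ)) / j.factorial) ^ r)) := by
  have h := ((tendsto_card_stars_div_pow j).pow r).mul (tendsto_pow_mul_starProb j r)
  have hlim : (1 / j.factorial : ℝ) ^ r * Real.exp (-(r * (j + 1) : ℕ)) =
      (Real.exp (-(j + 1 : ℕ)) / j.factorial) ^ r := by
    rw [div_pow, div_pow, one_pow, ← Real.exp_nat_mul, one_div_mul_eq_div, mul_neg, Nat.cast_mul]
  rw [hlim] at h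
  refine h.congr' ?_
  filter_upwards [eventually_gt_atTop 0] with n hn
  have hn0 : (n : ℝ) ≠ 0 := by exact_mod_cast hn.ne'
  rw [← mul_assoc, mul_comm r j, pow_mul, ← mul_pow, pow_succ]
  congr 2
  field_simp

lemma tendsto_treeProb_abs_starDensity_sub_le (j : ℕ) {δ : ℝ} (hδ : 0 < δ) :
    Tendsto (fun n => treeProb n fun G =>
      |starDensity j G - Real.exp (-(j + 1 : ℕ)) / j.factorial| ≤ δ) atTop (𝓝 1) := by
  have hmean : Tendsto (fun n => 𝔼 G : TreeOn (Fin n), starDensity j G.1) atTop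
      (𝓝 (Real.exp (-(j + 1 : ℕ)) / j.factorial)) := by
    have h := tendsto_card_stars_pow_mul_starProb j 1
    simp only [pow_one] at h
    refine h.congr' ?_
    filter_upwards [eventually_ge_atTop (j + 3)] with n hn
    exact (expect_starDensity hn).symm
  have hsq := (hmean.mul tendsto_one_div_atTop_nhds_zero_nat).add
    (tendsto_card_stars_pow_mul_starProb j 2)
  rw [mul_zero, zero_add] at hsq
  simp only [treeProb_eq_prob]
  refine tendsto_prob_abs_sub_le ?_ hmean ?_ hsq hδ
  · filter_upwards [eventually_gt_atTop 0] with n hn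
    have : NeZero n := ⟨hn.ne'⟩
    infer_instance
  · filter_upwards [eventually_ge_atTop (2 * j + 3)] with n hn
    exact expect_starDensity_sq_le hn

end Asymptotics

end PendantStar

theorem aas_pendant_star_count_general (k : ℕ) (hk : 1 ≤ k) :
    ∀ ε : ℝ, 0 < ε →
      Tendsto (fun n : ℕ =>
        treeProb n (fun G =>
          (1 - ε) * n * Real.exp (-(k : ℝ)) / (Nat.factorial (k - 1)) ≤
              (Nat.card {S : Finset (Fin n) // IsPendantStar G k S} : ℝ) ∧
          (Nat.card {S : Finset (Fin n) // IsPendantStar G k S} : ℝ) ≤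
              (1 + ε) * n * Real.exp (-(k : ℝ)) / (Nat.factorial (k - 1))))
        atTop (𝓝 1) := by
  intro ε hε
  obtain ⟨j, rfl⟩ : ∃ j, k = j + 1 := Nat.exists_eq_add_of_le' hk
  set a : ℝ := Real.exp (-(j + 1 : ℕ)) / j.factorial with ha
  have hδ : 0 < ε * a := by positivity
  have hdensity := PendantStar.tendsto_treeProb_abs_starDensity_sub_le j hδ
  refine hdensity.congr' ?_
  filter_upwards [eventually_gt_atTop 0] with n hn
  have hn0 : (0 : ℝ) < n := by exact_mod_cast hn
  congr 1
  funext G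
  rw [← ha, PendantStar.starDensity, abs_le, neg_le_sub_iff_le_add, sub_le_iff_le_add,
    ← sub_le_iff_le_add, le_div_iff₀ hn0, div_le_iff₀ hn0, Nat.add_sub_cancel, mul_div_assoc,
    mul_div_assoc, ← ha]
  ring_nf

/-- For every fixed `k ≥ 2` and every `ε > 0`, a.a.s. the number `X_k` of pendant stars of
size `k` in `𝒯_n` satisfies `(1-ε) n e^{-k}/(k-1)! ≤ X_k ≤ (1+ε) n e^{-k}/(k-1)!`. -/
theorem aas_pendant_star_count (k : ℕ) (hk : 2 ≤ k) :
    ∀ ε : ℝ, 0 < ε →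
      Tendsto (fun n : ℕ =>
        treeProb n (fun G =>
          (1 - ε) * n * Real.exp (-(k : ℝ)) / (Nat.factorial (k - 1)) ≤
              (Nat.card {S : Finset (Fin n) // IsPendantStar G k S} : ℝ) ∧
          (Nat.card {S : Finset (Fin n) // IsPendantStar G k S} : ℝ) ≤
              (1 + ε) * n * Real.exp (-(k : ℝ)) / (Nat.factorial (k - 1))))
        atTop (𝓝 1) :=
  aas_pendant_star_count_general k (one_le_two.trans hk)
end
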